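/- arXiv:1803.08386 — 3 statements merged into one kernel-verified Lean document; each statement's English description precedes it below -/
import Mathlib

section
/- Let x be a solution of the system with output y, and suppose that Ψ(t) is invertible for every t ∈ (t0, τ]. Fix ℓ ∈ (0, 1/2], set R_ν := 2^(ν−1) for ν = 1, 2, …, and let k ≥ 1 be an integer with ‖x‖_{[t0,τ]} < R_k. Let (t_ν)_{ν≥k} be a strictly decreasing sequence in (t0, τ] with lim_{ν→∞} t_ν = t0 such that for every ν ≥ k and all continuous d1, d2 : [t0, t_ν] → ℝⁿ with ‖d1‖_{[t0,t_ν]} ≤ R_ν and ‖d2‖_{[t0,t_ν]} ≤ R_ν one has ‖F_{t_ν}(·; d1) − F_{t_ν}(·; d2)‖_{[t0,t_ν]} ≤ ℓ ‖d1 − d2‖_{[t0,t_ν]}. Let z_k : [t0, t_k] → ℝⁿ be any continuous function with ‖z_k‖_{[t0,t_k]} < R_k, and define recursively z_{ν+1}(t) := F_{t_ν}(t; z_ν restricted to [t0, t_ν]) for t ∈ [t0, t_ν], ν = k, k+1, …. Then: (i) ‖z_ν‖_{[t0,t_ν]} ≤ R_ν for all ν ≥ k; (ii) ‖z_{ν+1}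 − x‖_{[t0,t_ν]} ≤ ℓ^(ν+1−k) ‖z_k − x‖_{[t0,t_k]} for all ν ≥ k; and (iii) lim_{ν→∞} z_ν(t_ν) = x(t0). -/
open MeasureTheory Matrix Set Filter Topology

noncomputable section

/-- `x` is a solution of `ẋ = A(t)x + g(t,x)` on `[t0, τ]` (integral form, componentwise). -/
def IsSolution (n : ℕ) (t0 τ : ℝ) (A : ℝ → Matrix (Fin n) (Fin n) ℝ)
    (g : ℝ → (Fin n → ℝ) → (Fin n → ℝ)) (x : ℝ → (Fin n → ℝ)) : Prop :=
  ContinuousOn x (Set.Icc t0 τ) ∧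
    ∀ t ∈ Set.Icc t0 τ, ∀ i : Fin n,
      x t i = x t0 i + ∫ s in t0..t, ((A s).mulVec (x s) i + g s (x s) i)

/-- `Φ` is the fundamental matrix of `ẋ = A(t)x` on `[t0, τ]`. -/
def IsFundamental (n : ℕ) (t0 τ : ℝ) (A : ℝ → Matrix (Fin n) (Fin n) ℝ)
    (Φ : ℝ → Matrix (Fin n) (Fin n) ℝ) : Prop :=
  (∀ i j : Fin n, ContinuousOn (fun t => Φ t i j) (Set.Icc t0 τ)) ∧
    ∀ t ∈ Set.Icc t0 τ, ∀ i j : Fin n,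
      Φ t i j = (1 : Matrix (Fin n) (Fin n) ℝ) i j + ∫ s in t0..t, (A s * Φ s) i j

/-- `Ψ(t) = ∫_{t0}^t Φ(s)ᵀ C(s)ᵀ C(s) Φ(s) ds` (entrywise integral). -/
def Psi (n k0 : ℕ) (t0 : ℝ) (C : ℝ → Matrix (Fin k0) (Fin n) ℝ)
    (Φ : ℝ → Matrix (Fin n) (Fin n) ℝ) (t : ℝ) : Matrix (Fin n) (Fin n) ℝ :=
  fun i j => ∫ s in t0..t, ((Φ s)ᵀ * (C s)ᵀ * C s * Φ s) i j

/-- `Ξ(t; z) = ∫_{t0}^t Φ(ρ)ᵀ C(ρ)ᵀ C(ρ) Φ(ρ) (∫_{t0}^ρ Φ(s)⁻¹ g(s, z(s)) ds) dρ`. -/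
def Xi (n k0 : ℕ) (t0 : ℝ) (C : ℝ → Matrix (Fin k0) (Fin n) ℝ)
    (Φ : ℝ → Matrix (Fin n) (Fin n) ℝ) (g : ℝ → (Fin n → ℝ) → (Fin n → ℝ))
    (z : ℝ → (Fin n → ℝ)) (t : ℝ) : Fin n → ℝ :=
  fun i => ∫ ρ in t0..t,
    ((Φ ρ)ᵀ * (C ρ)ᵀ * C ρ * Φ ρ).mulVec
      (fun i' => ∫ s in t0..ρ, ((Φ s)⁻¹).mulVec (g s (z s)) i') i

/-- The map `F_T(t; z)`. -/
def Fmap (n k0 : ℕ) (t0 : ℝ) (C : ℝ → Matrix (Fin k0) (Fin n) ℝ)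
    (Φ : ℝ → Matrix (Fin n) (Fin n) ℝ) (g : ℝ → (Fin n → ℝ) → (Fin n → ℝ))
    (y : ℝ → (Fin k0 → ℝ)) (T : ℝ) (z : ℝ → (Fin n → ℝ)) (t : ℝ) : Fin n → ℝ :=
  (Φ t).mulVec
      ((Psi n k0 t0 C Φ T)⁻¹.mulVec
        ((fun i => ∫ ρ in t0..T, ((Φ ρ)ᵀ * (C ρ)ᵀ).mulVec (y ρ) i)
          - Xi n k0 t0 C Φ g z T))
    + (Φ t).mulVec (fun i => ∫ ρ in t0..t, ((Φ ρ)⁻¹).mulVec (g ρ (z ρ)) i)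

/-- supremum norm of `f` over `[a, b]`. -/
def supN (n : ℕ) (a b : ℝ) (f : ℝ → (Fin n → ℝ)) : ℝ :=
  ⨆ t : Set.Icc a b, ‖f (t : ℝ)‖

/-- Regularity of the data `A`, `C`, `g` on `[t0, τ]`:  `A`, `C` measurable and bounded;
`g` measurable in `t`, continuous in `x`, bounded on bounded sets. -/
def RegularData (n k0 : ℕ) (t0 τ : ℝ) (A : ℝ → Matrix (Fin n) (Fin n) ℝ)
    (C : ℝ → Matrix (Fin k0) (Fin n) ℝ)
    (g : ℝ → (Fin n → ℝ) → (Fin n → ℝ)) : Prop :=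
  (∀ i j, Measurable fun t => A t i j) ∧
  (∃ M : ℝ, ∀ t ∈ Set.Icc t0 τ, ∀ i j, |A t i j| ≤ M) ∧
  (∀ i j, Measurable fun t => C t i j) ∧
  (∃ M : ℝ, ∀ t ∈ Set.Icc t0 τ, ∀ i j, |C t i j| ≤ M) ∧
  (∀ v : Fin n → ℝ, ∀ i, Measurable fun t => g t v i) ∧
  (∀ t ∈ Set.Icc t0 τ, Continuous (g t)) ∧
  (∀ R > (0:ℝ), ∃ M : ℝ, ∀ t ∈ Set.Icc t0 τ, ∀ v : Fin n → ℝ, ‖v‖ ≤ R → ‖g t v‖ ≤ M)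

/-- Bounded a.e.-measurable real function on `[a,b]`. -/
def Nice (a b : ℝ) (f : ℝ → ℝ) : Prop :=
  AEStronglyMeasurable f (volume.restrict (Icc a b)) ∧ ∃ M : ℝ, ∀ t ∈ Icc a b, |f t| ≤ M

lemma Nice.mono {a b c : ℝ} {f : ℝ → ℝ} (h : Nice a b f) (hc : c ≤ b) : Nice a c f := by
  obtain ⟨h1, M, hM⟩ := h
  exact ⟨h1.mono_measure (Measure.restrict_mono (Icc_subset_Icc_right hc) le_rfl), M,
    fun t ht => hM t ⟨ht.1, ht.2.trans hc⟩⟩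

lemma Nice.of_continuousOn {a b : ℝ} {f : ℝ → ℝ} (h : ContinuousOn f (Icc a b)) : Nice a b f := by
  refine ⟨h.aestronglyMeasurable measurableSet_Icc, ?_⟩
  obtain ⟨M, hM⟩ := isCompact_Icc.exists_bound_of_continuousOn h
  exact ⟨M, hM⟩

lemma Nice.of_measurable {a b : ℝ} {f : ℝ → ℝ} (h : Measurable f)
    (hb : ∃ M : ℝ, ∀ t ∈ Icc a b, |f t| ≤ M) : Nice a b f :=
  ⟨h.aestronglyMeasurable, hb⟩

lemma Nice.add {a b : ℝ} {f g : ℝ → ℝ} (hf : Nice a b f) (hg : Nice a b g) :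
    Nice a b (fun t => f t + g t) := by
  obtain ⟨h1, M, hM⟩ := hf
  obtain ⟨h2, M', hM'⟩ := hg
  exact ⟨h1.add h2, M + M', fun t ht => (abs_add_le _ _).trans (add_le_add (hM t ht) (hM' t ht))⟩

lemma Nice.mul {a b : ℝ} {f g : ℝ → ℝ} (hf : Nice a b f) (hg : Nice a b g) :
    Nice a b (fun t => f t * g t) := by
  obtain ⟨h1, M, hM⟩ := hf
  obtain ⟨h2, M', hM'⟩ := hg
  refine ⟨h1.mul h2, M * M', fun t ht => ?_⟩
  rw [abs_mul]
  exact mul_le_mul (hM t ht) (hM' t ht) (abs_nonneg _) ((abs_nonneg _).trans (hM t ht))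

lemma Nice.const {a b : ℝ} (c : ℝ) : Nice a b (fun _ => c) :=
  Nice.of_continuousOn continuousOn_const

lemma Nice.sum {a b : ℝ} {ι : Type*} (s : Finset ι) {f : ι → ℝ → ℝ}
    (hf : ∀ i ∈ s, Nice a b (f i)) : Nice a b (fun t => ∑ i ∈ s, f i t) := by
  classical
  induction s using Finset.induction_on with
  | empty => simpa using Nice.const 0
  | insert i s hi ih =>
    simp only [Finset.sum_insert hi]
    exact (hf i (by simp)).add (ih fun j hj => hf j (by simp [hj]))

lemma Nice.intervalIntegrable {a b t : ℝ} {f : ℝ → ℝ} (hf : Nice a b f) (ht : t ∈ Icc a b) :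
    IntervalIntegrable f volume a t := by
  obtain ⟨h1, M, hM⟩ := hf
  have : IntegrableOn f (Icc a b) :=
    IntegrableOn.of_bound (by simp) h1 M
      ((ae_restrict_iff' measurableSet_Icc).2 (Eventually.of_forall hM))
  rw [intervalIntegrable_iff_integrableOn_Icc_of_le ht.1]
  exact this.mono_set (Icc_subset_Icc_right ht.2)

lemma Nice.continuousOn_primitive {a b : ℝ} {f : ℝ → ℝ} (hf : Nice a b f) :
    ContinuousOn (fun t => ∫ s in a..t, f s) (Icc a b) := by
  rcases le_total a b with h | h
  · have := hf.intervalIntegrable (right_mem_Icc.2 h)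
    have h2 := intervalIntegral.continuousOn_primitive_interval' this left_mem_uIcc
    rwa [uIcc_of_le h] at h2
  · exact (Set.subsingleton_Icc_of_ge h).continuousOn _

/-- Product rule for primitives. -/
lemma prod_primitive {a b : ℝ} {u v α β : ℝ → ℝ} {u0 v0 : ℝ} (hα : Nice a b α) (hβ : Nice a b β)
    (hu : ∀ t ∈ Icc a b, u t = u0 + ∫ s in a..t, α s)
    (hv : ∀ t ∈ Icc a b, v t = v0 + ∫ s in a..t, β s) {t : ℝ} (ht : t ∈ Icc a b) :
    u t * v t = u0 * v0 + ∫ s in a..t, (α s * v s + u s * β s) := by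
  have iα := hα.intervalIntegrable ht
  have iβ := hβ.intervalIntegrable ht
  set U : ℝ → ℝ := fun t => u0 + ∫ s in a..t, α s with hU
  set V : ℝ → ℝ := fun t => v0 + ∫ s in a..t, β s with hV
  have cac : ∀ c : ℝ, AbsolutelyContinuousOnInterval (fun _ : ℝ => c) a t := fun c =>
    ((LipschitzWith.const c).lipschitzOnWith (s := uIcc a t)).absolutelyContinuousOnInterval
  have aU : AbsolutelyContinuousOnInterval U a t :=
    (cac u0).fun_add (iα.absolutelyContinuousOnInterval_intervalIntegral left_mem_uIcc)
  have aV : AbsolutelyContinuousOnInterval V a t :=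
    (cac v0).fun_add (iβ.absolutelyContinuousOnInterval_intervalIntegral left_mem_uIcc)
  have key := AbsolutelyContinuousOnInterval.integral_deriv_mul_eq_sub aU aV
  have e : ∫ s in a..t, (deriv U s * V s + U s * deriv V s)
      = ∫ s in a..t, (α s * v s + u s * β s) := by
    apply intervalIntegral.integral_congr_ae
    filter_upwards [iα.ae_hasDerivAt_integral, iβ.ae_hasDerivAt_integral] with s h1 h2 hs
    have hs' : s ∈ uIcc a t := uIoc_subset_uIcc hs
    have d1 := ((h1 hs' a left_mem_uIcc).const_add u0).deriv
    have d2 := ((h2 hs' a left_mem_uIcc).const_add v0).deriv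
    have hs2 : s ∈ Icc a b := by
      rw [uIcc_of_le ht.1] at hs'
      exact ⟨hs'.1, hs'.2.trans ht.2⟩
    rw [hu s hs2, hv s hs2]
    simp only [hU, hV]
    rw [d1, d2]
  rw [← e, key, hu t ht, hv t ht]
  simp [hU, hV]

/-- Integral Gronwall: `‖d t‖ ≤ K ∫ ‖d‖` forces `d = 0`. -/
lemma gronwall_zero {a b K : ℝ} {e : ℝ → ℝ} (hab : a ≤ b) (he : ContinuousOn e (Icc a b))
    (h0 : ∀ t ∈ Icc a b, 0 ≤ e t)
    (h : ∀ t ∈ Icc a b, e t ≤ K * ∫ s in a..t, e s) : ∀ t ∈ Icc a b, e t = 0 := by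
  set E : ℝ → ℝ := IccExtend hab (domRestrict (Icc a b) e) with hE
  have hEc : Continuous E := continuousOn_iff_continuous_domRestrict.1 he |>.Icc_extend'
  have hEe : ∀ t ∈ Icc a b, E t = e t := fun t ht => by
    rw [hE, IccExtend_of_mem hab _ ht]; rfl
  have hint : ∀ t ∈ Icc a b, ∫ s in a..t, e s = ∫ s in a..t, E s := fun t ht => by
    apply intervalIntegral.integral_congr
    intro s hs
    rw [uIcc_of_le ht.1] at hs
    exact (hEe s ⟨hs.1, hs.2.trans ht.2⟩).symm
  have hd : ∀ t, HasDerivAt (fun t => ∫ s in a..t, E s) (E t) t := fun t =>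
    intervalIntegral.integral_hasDerivAt_right (hEc.intervalIntegrable _ _)
      (hEc.stronglyMeasurableAtFilter _ _) hEc.continuousAt
  have hnn : ∀ t ∈ Icc a b, 0 ≤ ∫ s in a..t, E s := fun t ht => by
    apply intervalIntegral.integral_nonneg ht.1
    intro s hs
    rw [hEe s ⟨hs.1, hs.2.trans ht.2⟩]
    exact h0 s ⟨hs.1, hs.2.trans ht.2⟩
  have hg := norm_le_gronwallBound_of_norm_deriv_right_le (f := fun t => ∫ s in a..t, E s)
    (f' := E) (δ := 0) (K := K) (ε := 0) (a := a) (b := b)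
    (fun t _ => (hd t).continuousAt.continuousWithinAt)
    (fun t _ => (hd t).hasDerivWithinAt) (by simp) (fun t ht => by
      have ht' : t ∈ Icc a b := ⟨ht.1, ht.2.le⟩
      rw [Real.norm_of_nonneg (hnn t ht'), add_zero, hEe t ht', Real.norm_of_nonneg (h0 t ht'),
        ← hint t ht']
      exact h t ht')
  intro t ht
  have h1 := hg t ht
  rw [gronwallBound_ε0_δ0] at h1
  have h2 := norm_le_zero_iff.1 h1
  have h3 := h t ht
  rw [hint t ht, h2, mul_zero] at h3
  exact le_antisymm h3 (h0 t ht)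

/-- Carathéodory composition is nice. -/
lemma nice_caratheodory {n : ℕ} {a b : ℝ} (hab : a ≤ b) {g : ℝ → (Fin n → ℝ) → (Fin n → ℝ)}
    (hm : ∀ v : Fin n → ℝ, ∀ i, Measurable fun t => g t v i)
    (hc : ∀ t ∈ Icc a b, Continuous (g t))
    (hb : ∀ R > (0:ℝ), ∃ M : ℝ, ∀ t ∈ Icc a b, ∀ v : Fin n → ℝ, ‖v‖ ≤ R → ‖g t v‖ ≤ M)
    {z : ℝ → Fin n → ℝ} (hz : ContinuousOn z (Icc a b)) (i : Fin n) :
    Nice a b (fun t => g t (z t) i) := by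
  classical
  constructor
  · set Z : ℝ → Fin n → ℝ := IccExtend hab (domRestrict (Icc a b) z) with hZ
    have hZc : Continuous Z := continuousOn_iff_continuous_domRestrict.1 hz |>.Icc_extend'
    have hZe : ∀ t ∈ Icc a b, Z t = z t := fun t ht => by
      rw [hZ, IccExtend_of_mem hab _ ht]; rfl
    set u : (Fin n → ℝ) → ℝ → ℝ := fun v => (Icc a b).indicator (fun t => g t v i) with hu
    have hum : Measurable (Function.uncurry u) := by
      apply measurable_uncurry_of_continuous_of_measurable
      · intro t
        by_cases ht : t ∈ Icc a b
        · simp only [hu, indicator_of_mem ht]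
          exact (continuous_apply i).comp (hc t ht)
        · simp only [hu, indicator_of_notMem ht]
          exact continuous_const
      · intro v
        exact (hm v i).indicator measurableSet_Icc
    have hcomp : Measurable (fun t => u (Z t) t) := hum.comp (hZc.measurable.prodMk measurable_id)
    refine hcomp.aestronglyMeasurable.congr ?_
    refine (ae_restrict_iff' measurableSet_Icc).2 (Eventually.of_forall fun t ht => ?_)
    simp only [hu, indicator_of_mem ht, hZe t ht]
  · obtain ⟨M, hM⟩ := isCompact_Icc.exists_bound_of_continuousOn hz
    obtain ⟨M', hM'⟩ := hb (max M 1) (by positivity)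
    exact ⟨M', fun t ht => (norm_le_pi_norm (g t (z t)) i).trans
      (hM' t ht _ ((hM t ht).trans (le_max_left _ _)))⟩

lemma inv_entry_continuousOn {n : ℕ} {s : Set ℝ} {Φ : ℝ → Matrix (Fin n) (Fin n) ℝ}
    (hc : ∀ i j, ContinuousOn (fun t => Φ t i j) s) (hu : ∀ t ∈ s, IsUnit (Φ t)) (i j : Fin n) :
    ContinuousOn (fun t => (Φ t)⁻¹ i j) s := by
  have hcm : ContinuousOn Φ s := continuousOn_pi.2 fun i => continuousOn_pi.2 fun j => hc i j
  have hdet : ContinuousOn (fun t => (Φ t).det) s := (continuous_id.matrix_det).comp_continuousOn hcm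
  have hadj : ContinuousOn (fun t => (Φ t).adjugate i j) s :=
    ((continuous_id.matrix_adjugate).matrix_elem i j).comp_continuousOn hcm
  have : ContinuousOn (fun t => (Φ t).det⁻¹ * (Φ t).adjugate i j) s :=
    (hdet.inv₀ fun t ht => ((Matrix.isUnit_iff_isUnit_det _).1 (hu t ht)).ne_zero).mul hadj
  refine this.congr fun t _ => ?_
  simp [Matrix.inv_def]

lemma supN_le {n : ℕ} {a b : ℝ} {f : ℝ → Fin n → ℝ} {M : ℝ} (hab : a ≤ b)
    (h : ∀ t ∈ Icc a b, ‖f t‖ ≤ M) : supN n a b f ≤ M := by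
  have : Nonempty (Icc a b) := ⟨⟨a, left_mem_Icc.2 hab⟩⟩
  exact ciSup_le fun t => h t t.2

lemma le_supN {n : ℕ} {a b : ℝ} {f : ℝ → Fin n → ℝ} (hf : ContinuousOn f (Icc a b)) {t : ℝ}
    (ht : t ∈ Icc a b) : ‖f t‖ ≤ supN n a b f := by
  obtain ⟨M, hM⟩ := isCompact_Icc.exists_bound_of_continuousOn hf
  exact le_ciSup (f := fun t : Icc a b => ‖f (t : ℝ)‖)
    ⟨M, by rintro _ ⟨s, rfl⟩; exact hM s s.2⟩ ⟨t, ht⟩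

lemma h_nice {n k0 : ℕ} {t0 τ : ℝ} {A : ℝ → Matrix (Fin n) (Fin n) ℝ}
    {C : ℝ → Matrix (Fin k0) (Fin n) ℝ} {g : ℝ → (Fin n → ℝ) → (Fin n → ℝ)}
    (hreg : RegularData n k0 t0 τ A C g)
    {Φ : ℝ → Matrix (Fin n) (Fin n) ℝ} (hΦ : IsFundamental n t0 τ A Φ)
    (hΦinv : ∀ t ∈ Set.Icc t0 τ, IsUnit (Φ t)) {T : ℝ} (h0T : t0 ≤ T) (hT : T ≤ τ)
    {z : ℝ → (Fin n → ℝ)} (hz : ContinuousOn z (Icc t0 T)) (i : Fin n) :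
    Nice t0 T (fun s => ((Φ s)⁻¹).mulVec (g s (z s)) i) := by
  obtain ⟨_, _, _, _, hm, hc, hb⟩ := hreg
  have sub : ∀ t ∈ Icc t0 T, t ∈ Icc t0 τ := fun t ht => ⟨ht.1, ht.2.trans hT⟩
  simp only [Matrix.mulVec, dotProduct]
  refine Nice.sum _ fun j _ => Nice.mul ?_ ?_
  · exact Nice.of_continuousOn (inv_entry_continuousOn
      (fun i j => (hΦ.1 i j).mono sub) (fun t ht => hΦinv t (sub t ht)) i j)
  · exact nice_caratheodory h0T hm (fun t ht => hc t (sub t ht))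
      (fun R hR => (hb R hR).imp fun M hM t ht => hM t (sub t ht)) hz j

/-- Variation of constants. -/
lemma voc {n k0 : ℕ} {t0 τ : ℝ} (ht : t0 < τ) {A : ℝ → Matrix (Fin n) (Fin n) ℝ}
    {C : ℝ → Matrix (Fin k0) (Fin n) ℝ} {g : ℝ → (Fin n → ℝ) → (Fin n → ℝ)}
    (hreg : RegularData n k0 t0 τ A C g)
    {Φ : ℝ → Matrix (Fin n) (Fin n) ℝ} (hΦ : IsFundamental n t0 τ A Φ)
    (hΦinv : ∀ t ∈ Set.Icc t0 τ, IsUnit (Φ t))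
    {x : ℝ → (Fin n → ℝ)} (hx : IsSolution n t0 τ A g x) :
    ∀ t ∈ Icc t0 τ, x t =
      (Φ t).mulVec (x t0 + fun i => ∫ s in t0..t, ((Φ s)⁻¹).mulVec (g s (x s)) i) := by
  have hh := fun i => h_nice hreg hΦ hΦinv ht.le le_rfl hx.1 i
  have hg : ∀ i, Nice t0 τ (fun t => g t (x t) i) := fun i => by
    obtain ⟨_, _, _, _, hm, hc, hb⟩ := hreg
    exact nice_caratheodory ht.le hm hc hb hx.1 i
  have hA : ∀ i j, Nice t0 τ (fun t => A t i j) := fun i j => by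
    obtain ⟨hAm, ⟨M, hM⟩, _⟩ := hreg
    exact Nice.of_measurable (hAm i j) ⟨M, fun t ht => hM t ht i j⟩
  have hΦn : ∀ i j, Nice t0 τ (fun t => Φ t i j) := fun i j => Nice.of_continuousOn (hΦ.1 i j)
  have hAΦ : ∀ i j, Nice t0 τ (fun t => (A t * Φ t) i j) := fun i j => by
    simp only [Matrix.mul_apply]
    exact Nice.sum _ fun l _ => (hA i l).mul (hΦn l j)
  set h : ℝ → Fin n → ℝ := fun s => ((Φ s)⁻¹).mulVec (g s (x s)) with hhdef
  set v : ℝ → Fin n → ℝ := fun t i => x t0 i + ∫ s in t0..t, h s i with hv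
  have hvc : ∀ j, ContinuousOn (fun t => v t j) (Icc t0 τ) := fun j =>
    continuousOn_const.add (hh j).continuousOn_primitive
  set w : ℝ → Fin n → ℝ := fun t => (Φ t).mulVec (v t) with hw
  have hwc : ∀ i, ContinuousOn (fun t => w t i) (Icc t0 τ) := fun i => by
    simp only [hw, Matrix.mulVec, dotProduct]
    exact continuousOn_finsetSum _ fun j _ => (hΦ.1 i j).mul (hvc j)
  have hxc : ∀ i, ContinuousOn (fun t => x t i) (Icc t0 τ) := fun i => continuousOn_pi.1 hx.1 i
  have hAvec : ∀ u : ℝ → Fin n → ℝ, (∀ i, ContinuousOn (fun t => u t i) (Icc t0 τ)) → ∀ i,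
      Nice t0 τ (fun s => (A s).mulVec (u s) i) := fun u hu i => by
    simp only [Matrix.mulVec, dotProduct]
    exact Nice.sum _ fun j _ => (hA i j).mul (Nice.of_continuousOn (hu j))
  have hweq : ∀ t ∈ Icc t0 τ, ∀ i,
      w t i = x t0 i + ∫ s in t0..t, ((A s).mulVec (w s) i + g s (x s) i) := by
    intro t htt i
    have hp : ∀ j, Φ t i j * v t j = (1 : Matrix (Fin n) (Fin n) ℝ) i j * x t0 j
        + ∫ s in t0..t, ((A s * Φ s) i j * v s j + Φ s i j * h s j) := fun j =>
      prod_primitive (u := fun t => Φ t i j) (v := fun t => v t j) (hAΦ i j) (hh j)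
        (fun t ht => hΦ.2 t ht i j) (fun t _ => rfl) htt
    have e1 : w t i = ∑ j, Φ t i j * v t j := rfl
    rw [e1, Finset.sum_congr rfl fun j _ => hp j, Finset.sum_add_distrib,
      ← intervalIntegral.integral_finsetSum]
    · congr 1
      · change ((1 : Matrix (Fin n) (Fin n) ℝ).mulVec (x t0)) i = _
        rw [Matrix.one_mulVec]
      · apply intervalIntegral.integral_congr
        intro s hs
        rw [uIcc_of_le htt.1] at hs
        have hs' : s ∈ Icc t0 τ := ⟨hs.1, hs.2.trans htt.2⟩
        simp only [Finset.sum_add_distrib]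
        have a1 : ∑ j, (A s * Φ s) i j * v s j = (A s).mulVec (w s) i := by
          change ((A s * Φ s).mulVec (v s)) i = _
          rw [← Matrix.mulVec_mulVec]
        have a2 : ∑ j, Φ s i j * h s j = g s (x s) i := by
          change ((Φ s).mulVec (h s)) i = _
          rw [hhdef]
          simp only
          rw [Matrix.mulVec_mulVec, Matrix.mul_nonsing_inv _
            ((Matrix.isUnit_iff_isUnit_det _).1 (hΦinv s hs')), Matrix.one_mulVec]
        rw [a1, a2]
    · intro j _
      exact (((hAΦ i j).mul (Nice.of_continuousOn (hvc j))).add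
        ((hΦn i j).mul (hh j))).intervalIntegrable htt
  -- the difference
  have hdiff : ∀ t ∈ Icc t0 τ, ∀ i, w t i - x t i = ∫ s in t0..t, (A s).mulVec (w s - x s) i := by
    intro t htt i
    rw [hweq t htt i, hx.2 t htt i, add_sub_add_left_eq_sub, ← intervalIntegral.integral_sub]
    · apply intervalIntegral.integral_congr
      intro s _
      simp only [Matrix.mulVec_sub, Pi.sub_apply]
      ring
    · exact ((hAvec w hwc i).add (hg i)).intervalIntegrable htt
    · exact ((hAvec x hxc i).add (hg i)).intervalIntegrable htt
  have hdc : ContinuousOn (fun t => w t - x t) (Icc t0 τ) :=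
    (continuousOn_pi.2 hwc).sub hx.1
  obtain ⟨_, ⟨M, hM⟩, _⟩ := hreg
  have hz := gronwall_zero (e := fun t => ‖w t - x t‖) (K := n * M) ht.le hdc.norm
    (fun t _ => norm_nonneg _) (by
      intro t htt
      have hnn : 0 ≤ ∫ s in t0..t, ‖w s - x s‖ :=
        intervalIntegral.integral_nonneg htt.1 fun s _ => norm_nonneg _
      have hint : IntervalIntegrable (fun s => ‖w s - x s‖) volume t0 t :=
        (Nice.of_continuousOn hdc.norm).intervalIntegrable htt
      have hb : ∀ i, |w t i - x t i| ≤ n * M * ∫ s in t0..t, ‖w s - x s‖ := by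
        intro i
        rw [hdiff t htt i, ← intervalIntegral.integral_const_mul, ← Real.norm_eq_abs]
        refine intervalIntegral.norm_integral_le_of_norm_le htt.1 ?_ (hint.const_mul _)
        refine Eventually.of_forall fun s hs => ?_
        have hs' : s ∈ Icc t0 τ := ⟨hs.1.le, hs.2.trans htt.2⟩
        simp only [Matrix.mulVec, dotProduct]
        calc ‖∑ j, A s i j * (w s - x s) j‖ ≤ ∑ j, ‖A s i j * (w s - x s) j‖ := norm_sum_le _ _
          _ ≤ ∑ _j : Fin n, M * ‖w s - x s‖ := by
              refine Finset.sum_le_sum fun j _ => ?_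
              rw [norm_mul]
              exact mul_le_mul (hM s hs' i j) (norm_le_pi_norm _ j) (norm_nonneg _)
                ((abs_nonneg _).trans (hM s hs' i j))
          _ = n * M * ‖w s - x s‖ := by simp [mul_assoc]
      rcases isEmpty_or_nonempty (Fin n) with hem | hne
      · have : w t - x t = 0 := Subsingleton.elim _ _
        have hn0 : n = 0 := by
          rcases Nat.eq_zero_or_pos n with h | h
          · exact h
          · exact (hem.false ⟨0, h⟩).elim
        simp [this, hn0]
      · exact (pi_norm_le_iff_of_nonempty _).2 hb)
  intro t htt
  have := sub_eq_zero.1 (norm_eq_zero.1 (hz t htt))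
  exact this.symm

lemma Fmap_fixed {n k0 : ℕ} {t0 τ : ℝ} (ht : t0 < τ) {A : ℝ → Matrix (Fin n) (Fin n) ℝ}
    {C : ℝ → Matrix (Fin k0) (Fin n) ℝ} {g : ℝ → (Fin n → ℝ) → (Fin n → ℝ)}
    (hreg : RegularData n k0 t0 τ A C g)
    {Φ : ℝ → Matrix (Fin n) (Fin n) ℝ} (hΦ : IsFundamental n t0 τ A Φ)
    (hΦinv : ∀ t ∈ Set.Icc t0 τ, IsUnit (Φ t))
    {x : ℝ → (Fin n → ℝ)} (hx : IsSolution n t0 τ A g x)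
    {y : ℝ → (Fin k0 → ℝ)} (hy : ∀ t ∈ Set.Icc t0 τ, y t = (C t).mulVec (x t))
    {T : ℝ} (hT : T ∈ Ioc t0 τ) (hΨ : IsUnit (Psi n k0 t0 C Φ T)) :
    ∀ t ∈ Icc t0 T, Fmap n k0 t0 C Φ g y T x t = x t := by
  have hv := voc ht hreg hΦ hΦinv hx
  have hh := fun i => h_nice hreg hΦ hΦinv ht.le le_rfl hx.1 i
  have hTI : T ∈ Icc t0 τ := ⟨hT.1.le, hT.2⟩
  have hC : ∀ i j, Nice t0 τ (fun t => C t i j) := fun i j => by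
    obtain ⟨_, _, hCm, ⟨M, hM⟩, _⟩ := hreg
    exact Nice.of_measurable (hCm i j) ⟨M, fun t ht => hM t ht i j⟩
  have hΦn : ∀ i j, Nice t0 τ (fun t => Φ t i j) := fun i j => Nice.of_continuousOn (hΦ.1 i j)
  set G : ℝ → Matrix (Fin n) (Fin n) ℝ := fun s => (Φ s)ᵀ * (C s)ᵀ * C s * Φ s with hG
  have hGn : ∀ i j, Nice t0 τ (fun s => G s i j) := fun i j => by
    simp only [hG, Matrix.mul_apply, Matrix.transpose_apply]
    exact Nice.sum _ fun l _ => (Nice.sum _ fun m _ =>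
      (Nice.sum _ fun p _ => (hΦn p i).mul (hC m p)).mul (hC m l)).mul (hΦn l j)
  set q : ℝ → Fin n → ℝ := fun ρ i => ∫ s in t0..ρ, ((Φ s)⁻¹).mulVec (g s (x s)) i with hq
  have hqn : ∀ i, Nice t0 τ (fun ρ => q ρ i) := fun i =>
    Nice.of_continuousOn (hh i).continuousOn_primitive
  have key : (fun i => ∫ ρ in t0..T, ((Φ ρ)ᵀ * (C ρ)ᵀ).mulVec (y ρ) i)
      = (Psi n k0 t0 C Φ T).mulVec (x t0) + Xi n k0 t0 C Φ g x T := by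
    funext i
    have e1 : ∫ ρ in t0..T, ((Φ ρ)ᵀ * (C ρ)ᵀ).mulVec (y ρ) i
        = ∫ ρ in t0..T, ((∑ j, G ρ i j * x t0 j) + (G ρ).mulVec (q ρ) i) := by
      apply intervalIntegral.integral_congr
      intro ρ hρ
      rw [uIcc_of_le hT.1.le] at hρ
      have hρ' : ρ ∈ Icc t0 τ := ⟨hρ.1, hρ.2.trans hT.2⟩
      change ((Φ ρ)ᵀ * (C ρ)ᵀ).mulVec (y ρ) i = (G ρ).mulVec (x t0) i + (G ρ).mulVec (q ρ) i
      rw [hy ρ hρ', hv ρ hρ', ← Pi.add_apply, ← Matrix.mulVec_add, Matrix.mulVec_mulVec,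
        Matrix.mulVec_mulVec, hG]
    rw [e1, intervalIntegral.integral_add, intervalIntegral.integral_finsetSum]
    · rw [Pi.add_apply]
      congr 1
      simp only [intervalIntegral.integral_mul_const]
      rfl
    · intro j _
      exact ((hGn i j).mul (Nice.const _)).intervalIntegrable hTI
    · exact (Nice.sum _ fun j _ => (hGn i j).mul (Nice.const _)).intervalIntegrable hTI
    · simp only [Matrix.mulVec, dotProduct]
      exact (Nice.sum _ fun j _ => (hGn i j).mul (hqn j)).intervalIntegrable hTI
  intro t htt
  have htt' : t ∈ Icc t0 τ := ⟨htt.1, htt.2.trans hT.2⟩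
  rw [Fmap, key, add_sub_cancel_right, Matrix.mulVec_mulVec (x t0), Matrix.nonsing_inv_mul _
    ((Matrix.isUnit_iff_isUnit_det _).1 hΨ), Matrix.one_mulVec, ← Matrix.mulVec_add]
  exact (hv t htt').symm

lemma Fmap_cont {n k0 : ℕ} {t0 τ : ℝ} {A : ℝ → Matrix (Fin n) (Fin n) ℝ}
    {C : ℝ → Matrix (Fin k0) (Fin n) ℝ} {g : ℝ → (Fin n → ℝ) → (Fin n → ℝ)}
    (hreg : RegularData n k0 t0 τ A C g)
    {Φ : ℝ → Matrix (Fin n) (Fin n) ℝ} (hΦ : IsFundamental n t0 τ A Φ)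
    (hΦinv : ∀ t ∈ Set.Icc t0 τ, IsUnit (Φ t)) (y : ℝ → (Fin k0 → ℝ))
    {T : ℝ} (hT : T ∈ Ioc t0 τ) {z : ℝ → (Fin n → ℝ)} (hz : ContinuousOn z (Icc t0 T)) :
    ContinuousOn (Fmap n k0 t0 C Φ g y T z) (Icc t0 T) := by
  have hh := fun i => h_nice hreg hΦ hΦinv hT.1.le hT.2 hz i
  have hc : ∀ i j, ContinuousOn (fun t => Φ t i j) (Icc t0 T) := fun i j =>
    (hΦ.1 i j).mono (Icc_subset_Icc_right hT.2)
  refine continuousOn_pi.2 fun i => ?_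
  simp only [Fmap, Pi.add_apply, Matrix.mulVec, dotProduct]
  refine ContinuousOn.add ?_ ?_
  · exact continuousOn_finsetSum _ fun j _ => (hc i j).mul continuousOn_const
  · exact continuousOn_finsetSum _ fun j _ => (hc i j).mul (hh j).continuousOn_primitive

theorem stmt0 (n k0 : ℕ) (hn : 1 ≤ n) (hk0 : 1 ≤ k0) (t0 τ : ℝ) (ht : t0 < τ)
    (A : ℝ → Matrix (Fin n) (Fin n) ℝ) (C : ℝ → Matrix (Fin k0) (Fin n) ℝ)
    (g : ℝ → (Fin n → ℝ) → (Fin n → ℝ))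
    (hreg : RegularData n k0 t0 τ A C g)
    (Φ : ℝ → Matrix (Fin n) (Fin n) ℝ) (hΦ : IsFundamental n t0 τ A Φ)
    (hΦinv : ∀ t ∈ Set.Icc t0 τ, IsUnit (Φ t))
    (x : ℝ → (Fin n → ℝ)) (hx : IsSolution n t0 τ A g x)
    (y : ℝ → (Fin k0 → ℝ)) (hy : ∀ t ∈ Set.Icc t0 τ, y t = (C t).mulVec (x t))
    (hΨ : ∀ t ∈ Set.Ioc t0 τ, IsUnit (Psi n k0 t0 C Φ t))
    (ℓ : ℝ) (hℓ : ℓ ∈ Set.Ioc (0:ℝ) (1/2))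
    -- `R ν = 2^(ν-1)`
    (R : ℕ → ℝ) (hRdef : ∀ ν : ℕ, 1 ≤ ν → R ν = 2 ^ (ν - 1))
    (k : ℕ) (hk : 1 ≤ k) (hxk : supN n t0 τ x < R k)
    (tseq : ℕ → ℝ)
    (htseq_mem : ∀ ν : ℕ, k ≤ ν → tseq ν ∈ Set.Ioc t0 τ)
    (htseq_dec : ∀ ν : ℕ, k ≤ ν → tseq (ν + 1) < tseq ν)
    (htseq_lim : Filter.Tendsto tseq Filter.atTop (nhds t0))
    (hcontr : ∀ ν : ℕ, k ≤ ν → ∀ d1 d2 : ℝ → (Fin n → ℝ),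
      ContinuousOn d1 (Set.Icc t0 (tseq ν)) → ContinuousOn d2 (Set.Icc t0 (tseq ν)) →
      supN n t0 (tseq ν) d1 ≤ R ν → supN n t0 (tseq ν) d2 ≤ R ν →
      supN n t0 (tseq ν)
          (fun t => Fmap n k0 t0 C Φ g y (tseq ν) d1 t - Fmap n k0 t0 C Φ g y (tseq ν) d2 t)
        ≤ ℓ * supN n t0 (tseq ν) (fun t => d1 t - d2 t))
    (z : ℕ → ℝ → (Fin n → ℝ))
    (hzk_cont : ContinuousOn (z k) (Set.Icc t0 (tseq k)))
    (hzk_bdd : supN n t0 (tseq k) (z k) < R k)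
    (hzrec : ∀ ν : ℕ, k ≤ ν → ∀ t ∈ Set.Icc t0 (tseq ν),
      z (ν + 1) t = Fmap n k0 t0 C Φ g y (tseq ν) (z ν) t) :
    (∀ ν : ℕ, k ≤ ν → supN n t0 (tseq ν) (z ν) ≤ R ν) ∧
    (∀ ν : ℕ, k ≤ ν →
      supN n t0 (tseq ν) (fun t => z (ν + 1) t - x t)
        ≤ ℓ ^ (ν + 1 - k) * supN n t0 (tseq k) (fun t => z k t - x t)) ∧
    Filter.Tendsto (fun ν => z ν (tseq ν)) Filter.atTop (nhds (x t0)) := by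
  obtain ⟨hℓ0, hℓ1⟩ := hℓ
  have hR2 : ∀ ν, k ≤ ν → 2 * R k ≤ R (ν + 1) := fun ν hν => by
    rw [hRdef k hk, hRdef (ν + 1) (by omega), ← pow_succ']
    exact pow_le_pow_right₀ (by norm_num) (by omega)
  have hRm : ∀ ν, k ≤ ν → R k ≤ R ν := fun ν hν => by
    rw [hRdef k hk, hRdef ν (by omega)]
    exact pow_le_pow_right₀ (by norm_num) (by omega)
  have hsub : ∀ ν, k ≤ ν → Icc t0 (tseq ν) ⊆ Icc t0 τ := fun ν hν =>
    Icc_subset_Icc_right (htseq_mem ν hν).2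
  have hxb : ∀ t ∈ Icc t0 τ, ‖x t‖ ≤ R k := fun t htt => (le_supN hx.1 htt).trans hxk.le
  have hxs : ∀ ν, k ≤ ν → supN n t0 (tseq ν) x ≤ R ν := fun ν hν =>
    supN_le (htseq_mem ν hν).1.le fun t htt => (hxb t (hsub ν hν htt)).trans (hRm ν hν)
  have hfix := fun ν (hν : k ≤ ν) => Fmap_fixed ht hreg hΦ hΦinv hx hy (htseq_mem ν hν)
    (hΨ _ (htseq_mem ν hν))
  set D := supN n t0 (tseq k) (fun t => z k t - x t) with hD
  have hDle : D ≤ 2 * R k := supN_le (htseq_mem k le_rfl).1.le fun t htt => by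
    have h1 := (le_supN hzk_cont htt).trans hzk_bdd.le
    have h2 := hxb t (hsub k le_rfl htt)
    linarith [norm_sub_le (z k t) (x t)]
  have hD0 : 0 ≤ D := Real.iSup_nonneg fun _ => norm_nonneg _
  -- one step
  have step : ∀ ν, k ≤ ν → ContinuousOn (z ν) (Icc t0 (tseq ν)) →
      supN n t0 (tseq ν) (z ν) ≤ R ν →
      supN n t0 (tseq ν) (fun t => z ν t - x t) ≤ ℓ ^ (ν - k) * D →
      ContinuousOn (z (ν + 1)) (Icc t0 (tseq ν)) ∧
      supN n t0 (tseq ν) (fun t => z (ν + 1) t - x t) ≤ ℓ ^ (ν + 1 - k) * D := by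
    intro ν hν hc hb he
    have hcz : ContinuousOn (z (ν + 1)) (Icc t0 (tseq ν)) :=
      (Fmap_cont hreg hΦ hΦinv y (htseq_mem ν hν) hc).congr (hzrec ν hν)
    refine ⟨hcz, ?_⟩
    have h1 := hcontr ν hν (z ν) x hc (hx.1.mono (hsub ν hν)) hb (hxs ν hν)
    have e : supN n t0 (tseq ν) (fun t => z (ν + 1) t - x t) = supN n t0 (tseq ν)
        (fun t => Fmap n k0 t0 C Φ g y (tseq ν) (z ν) t
          - Fmap n k0 t0 C Φ g y (tseq ν) x t) := by
      unfold supN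
      congr 1
      funext t
      simp only
      rw [hzrec ν hν t t.2, hfix ν hν t t.2]
    rw [e]
    refine h1.trans ((mul_le_mul_of_nonneg_left he hℓ0.le).trans_eq ?_)
    rw [Nat.succ_sub hν, pow_succ']
    ring
  have main : ∀ ν, k ≤ ν → ContinuousOn (z ν) (Icc t0 (tseq ν)) ∧
      supN n t0 (tseq ν) (z ν) ≤ R ν ∧
      supN n t0 (tseq ν) (fun t => z ν t - x t) ≤ ℓ ^ (ν - k) * D := by
    intro ν hν
    induction ν, hν using Nat.le_induction with
    | base => exact ⟨hzk_cont, hzk_bdd.le, by simp [hD]⟩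
    | succ ν hν ih =>
      obtain ⟨hcz, hs⟩ := step ν hν ih.1 ih.2.1 ih.2.2
      have hss : Icc t0 (tseq (ν + 1)) ⊆ Icc t0 (tseq ν) :=
        Icc_subset_Icc_right (htseq_dec ν hν).le
      have hdc : ContinuousOn (fun t => z (ν + 1) t - x t) (Icc t0 (tseq ν)) :=
        hcz.sub (hx.1.mono (hsub ν hν))
      have hpt : ∀ t ∈ Icc t0 (tseq (ν + 1)), ‖z (ν + 1) t - x t‖ ≤ ℓ ^ (ν + 1 - k) * D :=
        fun t htt => (le_supN hdc (hss htt)).trans hs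
      have h0 := (htseq_mem (ν + 1) (by omega)).1.le
      refine ⟨hcz.mono hss, supN_le h0 fun t htt => ?_, supN_le h0 hpt⟩
      have hp : ℓ ^ (ν + 1 - k) ≤ 1 / 2 :=
        (pow_le_of_le_one hℓ0.le (by linarith) (by omega)).trans hℓ1
      have h3 : ℓ ^ (ν + 1 - k) * D ≤ R k := by nlinarith
      have h4 := hpt t htt
      have h5 := hxb t (hsub (ν + 1) (by omega) htt)
      have h6 := hR2 ν hν
      have h7 : ‖z (ν + 1) t‖ ≤ ‖z (ν + 1) t - x t‖ + ‖x t‖ := by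
        simpa using norm_add_le (z (ν + 1) t - x t) (x t)
      linarith
  refine ⟨fun ν hν => (main ν hν).2.1, fun ν hν =>
    (step ν hν (main ν hν).1 (main ν hν).2.1 (main ν hν).2.2).2, ?_⟩
  have hmem : ∀ᶠ ν in atTop, tseq ν ∈ Icc t0 τ := by
    filter_upwards [eventually_ge_atTop k] with ν hν
    exact ⟨(htseq_mem ν hν).1.le, (htseq_mem ν hν).2⟩
  have hx1 : Tendsto (fun ν => x (tseq ν)) atTop (𝓝 (x t0)) :=
    (hx.1 t0 (left_mem_Icc.2 ht.le)).tendsto.comp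
      (tendsto_nhdsWithin_iff.2 ⟨htseq_lim, hmem⟩)
  have hx2 : Tendsto (fun ν => z ν (tseq ν) - x (tseq ν)) atTop (𝓝 0) := by
    have hgeo : Tendsto (fun ν : ℕ => ℓ ^ (ν - k) * D) atTop (𝓝 0) := by
      have := ((tendsto_pow_atTop_nhds_zero_of_lt_one hℓ0.le (by linarith : ℓ < 1)).comp
        (tendsto_sub_atTop_nat k)).mul_const D
      simpa using this
    refine squeeze_zero_norm' ?_ hgeo
    filter_upwards [eventually_ge_atTop k] with ν hν
    obtain ⟨h1, _, h3⟩ := main ν hν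
    exact (le_supN (f := fun t => z ν t - x t) (h1.sub (hx.1.mono (hsub ν hν)))
      (right_mem_Icc.2 (htseq_mem ν hν).1.le)).trans h3
  simpa using hx2.add hx1
end
end

section
/- Assume lim_{s→t0⁺} a_l(s) = α_l with α_l ≠ 0 for every l = 2, …, n, and suppose |f_n(t, z1) − f_n(t, z2)| ≤ L_ρ |z1 − z2| for all t ∈ [t0,τ] and |z1|, |z2| ≤ ρ, for each ρ > 0. Let y : [t0,τ] → ℝ be a continuous function which is the output (first component) of at least one solution of the triangular system. Then for every R > 0 there exists a strictly decreasing sequence (t_ν)_{ν≥1} in (t0, τ] with lim_{ν→∞} t_ν = t0 and Ψ(t_ν) invertible for every ν, such that: for every solution x of the triangular system with x_1(t) = y(t) on [t0,τ] and ‖x‖_{[t0,τ]} < R, and every continuous z_1 : [t0, t_1] → ℝⁿ with ‖z_1‖_{[t0,t_1]} < R, the iterates z_{ν+1}(t) := F_{t_ν}(t; z_ν restricted to [t0,t_ν]), t ∈ [t0, t_ν], satisfy ‖z_{ν+1} − x‖_{[t0,t_ν]} ≤ 2^{−ν} ‖z_1 − x‖_{[t0,t_1]} for all ν ≥ 1;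 in particular lim_{ν→∞} z_ν(t_ν) = x(t0). -/
open MeasureTheory Matrix Set Filter Topology

noncomputable section

/-- The triangular system matrix: `A(t)_{i,i+1} = a_{i+1}(t)` (1-based), zero elsewhere. -/
def triA (n : ℕ) (a : ℕ → ℝ → ℝ) (t : ℝ) : Matrix (Fin n) (Fin n) ℝ :=
  Matrix.of fun i j => if (j : ℕ) = (i : ℕ) + 1 then a ((i : ℕ) + 2) t else 0

/-- The output row vector `C = (1, 0, …, 0)`. -/
def triC (n : ℕ) : Matrix (Fin 1) (Fin n) ℝ :=
  Matrix.of fun _ j => if (j : ℕ) = 0 then 1 else 0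

/-- The triangular vector field `g(t,x) = (f_1(t), …, f_{n-1}(t), f_n(t,x))ᵀ`. -/
def triG (n : ℕ) (f : ℕ → ℝ → ℝ) (fn : ℝ → (Fin n → ℝ) → ℝ)
    (t : ℝ) (x : Fin n → ℝ) : Fin n → ℝ :=
  fun i => if (i : ℕ) = n - 1 then fn t x else f ((i : ℕ) + 1) t

/-- Regularity of the triangular data: `a_l`, `f_l` measurable and bounded on `[t0,τ]`,
`f_n` measurable in `t` and continuous in `x`. -/
def TriRegular (n : ℕ) (t0 τ : ℝ) (a f : ℕ → ℝ → ℝ)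
    (fn : ℝ → (Fin n → ℝ) → ℝ) : Prop :=
  (∀ l, 2 ≤ l → l ≤ n → Measurable (a l)) ∧
  (∀ l, 2 ≤ l → l ≤ n → ∃ M : ℝ, ∀ t ∈ Set.Icc t0 τ, |a l t| ≤ M) ∧
  (∀ l, 1 ≤ l → l ≤ n - 1 → Measurable (f l)) ∧
  (∀ l, 1 ≤ l → l ≤ n - 1 → ∃ M : ℝ, ∀ t ∈ Set.Icc t0 τ, |f l t| ≤ M) ∧
  (∀ v : Fin n → ℝ, Measurable fun t => fn t v) ∧
  (∀ t ∈ Set.Icc t0 τ, Continuous (fn t))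


/-! ### Auxiliary lemmas -/

lemma intInt_mono {t0 T t : ℝ} {p : ℝ → ℝ} (h : IntervalIntegrable p volume t0 T)
    (ht : t ∈ Icc t0 T) : IntervalIntegrable p volume t0 t := by
  refine h.mono_set ?_
  rw [uIcc_of_le ht.1, uIcc_of_le (ht.1.trans ht.2)]
  exact Icc_subset_Icc_right ht.2

lemma contOn_prim {t0 T : ℝ} (hT : t0 ≤ T) {p : ℝ → ℝ} (h : IntervalIntegrable p volume t0 T) :
    ContinuousOn (fun t => ∫ s in t0..t, p s) (Icc t0 T) := by
  have := intervalIntegral.continuousOn_primitive_interval' h (left_mem_uIcc)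
  rwa [uIcc_of_le hT] at this

lemma integral_congr_Icc {t0 T : ℝ} (hT : t0 ≤ T) {p q : ℝ → ℝ}
    (h : ∀ s ∈ Icc t0 T, p s = q s) : ∫ s in t0..T, p s = ∫ s in t0..T, q s := by
  apply intervalIntegral.integral_congr
  rw [uIcc_of_le hT]
  exact h

lemma prod_rule {t0 T : ℝ} {p q P Q : ℝ → ℝ}
    (hp : IntervalIntegrable p volume t0 T) (hq : IntervalIntegrable q volume t0 T)
    (hP : ∀ t ∈ Icc t0 T, P t = P t0 + ∫ s in t0..t, p s)
    (hQ : ∀ t ∈ Icc t0 T, Q t = Q t0 + ∫ s in t0..t, q s) :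
    ∀ t ∈ Icc t0 T, P t * Q t = P t0 * Q t0 + ∫ s in t0..t, (p s * Q s + P s * q s) := by
  intro t ht
  have hp' := intInt_mono hp ht
  have hq' := intInt_mono hq ht
  have aP0 := hp'.absolutelyContinuousOnInterval_intervalIntegral (c := t0) left_mem_uIcc
  have aQ0 := hq'.absolutelyContinuousOnInterval_intervalIntegral (c := t0) left_mem_uIcc
  have cst : ∀ c : ℝ, AbsolutelyContinuousOnInterval (fun _ : ℝ => c) t0 t := fun c =>
    (contDiff_const (c := c) (n := 1)).contDiffOn.absolutelyContinuousOnInterval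
  have aP := (cst (P t0)).add aP0
  have aQ := (cst (Q t0)).add aQ0
  have key := aP.integral_deriv_mul_eq_sub aQ
  have e1 : ∫ s in t0..t, (p s * Q s + P s * q s) = P t * Q t - P t0 * Q t0 := by
    rw [hP t ht, hQ t ht]
    have : P t0 * Q t0 = (P t0 + ∫ s in t0..t0, p s) * (Q t0 + ∫ s in t0..t0, q s) := by simp
    rw [this]
    refine Eq.trans ?_ key
    apply intervalIntegral.integral_congr_ae
    filter_upwards [hp'.ae_hasDerivAt_integral, hq'.ae_hasDerivAt_integral] with s h1 h2 h3
    have h4 : s ∈ uIcc t0 t := uIoc_subset_uIcc h3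
    have h5 : s ∈ Icc t0 T := by
      rw [uIcc_of_le ht.1] at h4
      exact ⟨h4.1, h4.2.trans ht.2⟩
    have d1 := ((h1 h4 t0 left_mem_uIcc).const_add (P t0)).deriv
    have d2 := ((h2 h4 t0 left_mem_uIcc).const_add (Q t0)).deriv
    change _ = deriv (fun x => P t0 + ∫ s in t0..x, p s) s * (Q t0 + ∫ u in t0..s, q u) +
      (P t0 + ∫ u in t0..s, p u) * deriv (fun x => Q t0 + ∫ s in t0..x, q s) s
    rw [d1, d2, ← hP s h5, ← hQ s h5]
  rw [e1]; ring

lemma triA_mulVec (n : ℕ) (a : ℕ → ℝ → ℝ) (s : ℝ) (v : Fin n → ℝ) (i : Fin n) :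
    (triA n a s).mulVec v i
      = if h : (i : ℕ) + 1 < n then a ((i : ℕ) + 2) s * v ⟨(i : ℕ) + 1, h⟩ else 0 := by
  simp only [Matrix.mulVec, dotProduct, triA, Matrix.of_apply, ite_mul, zero_mul]
  split_ifs with h
  · rw [Finset.sum_eq_single ⟨(i : ℕ) + 1, h⟩]
    · simp
    · intro b _ hb
      rw [if_neg]
      intro hb'
      exact hb (Fin.ext hb')
    · simp
  · apply Finset.sum_eq_zero
    intro j _
    rw [if_neg]
    have := j.2
    omega

lemma triA_mul (n : ℕ) (a : ℕ → ℝ → ℝ) (s : ℝ) (P : Matrix (Fin n) (Fin n) ℝ) (i j : Fin n) :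
    (triA n a s * P) i j
      = if h : (i : ℕ) + 1 < n then a ((i : ℕ) + 2) s * P ⟨(i : ℕ) + 1, h⟩ j else 0 :=
  triA_mulVec n a s (fun k => P k j) i

/-- growth estimate, by downward induction on the component -/
lemma growth {n : ℕ} {t0 T M β : ℝ} {a : ℕ → ℝ → ℝ} (hM : 0 ≤ M) (hβ : 0 ≤ β)
    (ha : ∀ l, 2 ≤ l → l ≤ n → ∀ t ∈ Icc t0 T, |a l t| ≤ M)
    {q b : ℝ → Fin n → ℝ}
    (hq : ∀ t ∈ Icc t0 T, ∀ i, q t i = ∫ s in t0..t, ((triA n a s).mulVec (q s) i + b s i))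
    (hb0 : ∀ t ∈ Icc t0 T, ∀ i : Fin n, (i : ℕ) + 1 < n → b t i = 0)
    (hb1 : ∀ t ∈ Icc t0 T, ∀ i : Fin n, (i : ℕ) + 1 = n → |b t i| ≤ β) :
    ∀ k : ℕ, ∀ i : Fin n, (i : ℕ) + k + 1 = n → ∀ t ∈ Icc t0 T,
      |q t i| ≤ M ^ k * β * (t - t0) ^ (k + 1) := by
  intro k
  induction k with
  | zero =>
    intro i hi t ht
    rw [hq t ht i, ← Real.norm_eq_abs]
    have : ‖∫ s in t0..t, ((triA n a s).mulVec (q s) i + b s i)‖ ≤ β * |t - t0| := by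
      apply intervalIntegral.norm_integral_le_of_norm_le_const
      intro s hs
      rw [uIoc_of_le ht.1] at hs
      rw [triA_mulVec, dif_neg (by omega), zero_add]
      exact hb1 s ⟨hs.1.le, hs.2.trans ht.2⟩ i (by omega)
    rw [abs_of_nonneg (by linarith [ht.1])] at this
    simpa using this
  | succ k ih =>
    intro i hi t ht
    rw [hq t ht i, ← Real.norm_eq_abs]
    have hin : (i : ℕ) + 1 < n := by omega
    have : ‖∫ s in t0..t, ((triA n a s).mulVec (q s) i + b s i)‖
        ≤ (M ^ (k + 1) * β * (t - t0) ^ (k + 1)) * |t - t0| := by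
      apply intervalIntegral.norm_integral_le_of_norm_le_const
      intro s hs
      rw [uIoc_of_le ht.1] at hs
      have hs' : s ∈ Icc t0 T := ⟨hs.1.le, hs.2.trans ht.2⟩
      rw [triA_mulVec, dif_pos hin, hb0 s hs' i hin, add_zero, Real.norm_eq_abs, abs_mul]
      have h1 := ha (i + 2) (by omega) (by omega) s hs'
      have h2 := ih ⟨i + 1, hin⟩ (by simp; omega) s hs'
      have h3 : (s - t0) ^ (k + 1) ≤ (t - t0) ^ (k + 1) :=
        pow_le_pow_left₀ (by linarith [hs.1]) (by linarith [hs.2]) _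
      calc _ ≤ M * (M ^ k * β * (t - t0) ^ (k + 1)) := by
            apply mul_le_mul h1 _ (abs_nonneg _) hM
            exact h2.trans (mul_le_mul_of_nonneg_left h3 (by positivity))
        _ = _ := by ring
    rw [abs_of_nonneg (by linarith [ht.1])] at this
    calc _ ≤ _ := this
      _ = _ := by ring

lemma Phi_lower {n : ℕ} {t0 τ : ℝ} {a : ℕ → ℝ → ℝ}
    {Φ : ℝ → Matrix (Fin n) (Fin n) ℝ} (hΦ : IsFundamental n t0 τ (triA n a) Φ) :
    ∀ k : ℕ, ∀ i : Fin n, (i : ℕ) + k + 1 = n → ∀ t ∈ Icc t0 τ, ∀ j : Fin n, j ≤ i →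
      Φ t i j = (1 : Matrix (Fin n) (Fin n) ℝ) i j := by
  intro k
  induction k with
  | zero =>
    intro i hi t ht j hj
    rw [hΦ.2 t ht i j]
    have : ∀ s, (triA n a s * Φ s) i j = 0 := fun s => by
      rw [triA_mul, dif_neg (by omega)]
    simp [this]
  | succ k ih =>
    intro i hi t ht j hj
    have hin : (i : ℕ) + 1 < n := by omega
    rw [hΦ.2 t ht i j]
    have : ∫ s in t0..t, (triA n a s * Φ s) i j = ∫ s in t0..t, (0:ℝ) := by
      apply integral_congr_Icc ht.1
      intro s hs
      have hji : (j : ℕ) ≤ i := hj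
      rw [triA_mul, dif_pos hin, ih ⟨i + 1, hin⟩ (by simp; omega) s ⟨hs.1, hs.2.trans ht.2⟩ j
        (by rw [Fin.le_def]; simp; omega), Matrix.one_apply_ne, mul_zero]
      intro h
      have := congrArg Fin.val h
      simp at this
      omega
    rw [this]; simp

lemma Phi_det {n : ℕ} {t0 τ : ℝ} {a : ℕ → ℝ → ℝ}
    {Φ : ℝ → Matrix (Fin n) (Fin n) ℝ} (hΦ : IsFundamental n t0 τ (triA n a) Φ)
    {t : ℝ} (ht : t ∈ Icc t0 τ) : (Φ t).det = 1 := by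
  have h : ∀ i j : Fin n, j ≤ i → Φ t i j = (1 : Matrix (Fin n) (Fin n) ℝ) i j := fun i j hij =>
    Phi_lower hΦ (n - 1 - i) i (by omega) t ht j hij
  rw [Matrix.det_of_isUpperTriangular]
  · apply Finset.prod_eq_one
    intro i _
    rw [h i i le_rfl, Matrix.one_apply_eq]
  · intro i j hij
    have hij' : j < i := hij
    rw [h i j hij'.le, Matrix.one_apply_ne hij'.ne']

lemma Phi_t0 {n : ℕ} {t0 τ : ℝ} (hτ : t0 ≤ τ) {A : ℝ → Matrix (Fin n) (Fin n) ℝ}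
    {Φ : ℝ → Matrix (Fin n) (Fin n) ℝ} (hΦ : IsFundamental n t0 τ A Φ) : Φ t0 = 1 := by
  ext i j
  rw [hΦ.2 t0 ⟨le_rfl, hτ⟩ i j]; simp

lemma Phi_cont {n : ℕ} {t0 τ : ℝ} {A : ℝ → Matrix (Fin n) (Fin n) ℝ}
    {Φ : ℝ → Matrix (Fin n) (Fin n) ℝ} (hΦ : IsFundamental n t0 τ A Φ) :
    ContinuousOn Φ (Icc t0 τ) := by
  apply continuousOn_pi.2
  intro i
  apply continuousOn_pi.2
  intro j
  exact hΦ.1 i j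

lemma PhiInv_cont {n : ℕ} {t0 τ : ℝ} {a : ℕ → ℝ → ℝ}
    {Φ : ℝ → Matrix (Fin n) (Fin n) ℝ} (hΦ : IsFundamental n t0 τ (triA n a) Φ) (i j : Fin n) :
    ContinuousOn (fun t => (Φ t)⁻¹ i j) (Icc t0 τ) := by
  have h1 : Continuous (fun M : Matrix (Fin n) (Fin n) ℝ => M.adjugate i j) :=
    (continuous_id.matrix_adjugate).matrix_elem i j
  refine (h1.comp_continuousOn (Phi_cont hΦ)).congr ?_
  intro t ht
  simp [Matrix.inv_def, Phi_det hΦ ht]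


lemma IsFundamental.mono {n : ℕ} {t0 τ T : ℝ} {A : ℝ → Matrix (Fin n) (Fin n) ℝ}
    {Φ : ℝ → Matrix (Fin n) (Fin n) ℝ} (hΦ : IsFundamental n t0 τ A Φ) (hT : T ≤ τ) :
    IsFundamental n t0 T A Φ :=
  ⟨fun i j => (hΦ.1 i j).mono (Icc_subset_Icc_right hT),
    fun t ht i j => hΦ.2 t ⟨ht.1, ht.2.trans hT⟩ i j⟩

lemma contOn_int {t0 T : ℝ} (hT : t0 ≤ T) {p : ℝ → ℝ} (hp : ContinuousOn p (Icc t0 T)) :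
    IntervalIntegrable p volume t0 T := by
  apply ContinuousOn.intervalIntegrable
  rwa [uIcc_of_le hT]

lemma int_mul_cont {t0 T : ℝ} (hT : t0 ≤ T) {p q : ℝ → ℝ} (hp : IntervalIntegrable p volume t0 T)
    (hq : ContinuousOn q (Icc t0 T)) : IntervalIntegrable (fun s => p s * q s) volume t0 T := by
  apply hp.mul_continuousOn
  rwa [uIcc_of_le hT]

lemma cont_mul_int {t0 T : ℝ} (hT : t0 ≤ T) {p q : ℝ → ℝ} (hp : IntervalIntegrable p volume t0 T)
    (hq : ContinuousOn q (Icc t0 T)) : IntervalIntegrable (fun s => q s * p s) volume t0 T := by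
  apply hp.continuousOn_mul
  rwa [uIcc_of_le hT]

lemma triA_mulVec_int {n : ℕ} {t0 T : ℝ} (hT : t0 ≤ T) {a : ℕ → ℝ → ℝ}
    (ha : ∀ l, 2 ≤ l → l ≤ n → IntervalIntegrable (a l) volume t0 T)
    {x : ℝ → Fin n → ℝ} (hx : ∀ i, ContinuousOn (fun t => x t i) (Icc t0 T)) (i : Fin n) :
    IntervalIntegrable (fun s => (triA n a s).mulVec (x s) i) volume t0 T := by
  simp only [triA_mulVec]
  split_ifs with h
  · exact int_mul_cont hT (ha _ (by omega) (by omega)) (hx _)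
  · exact contOn_int hT continuousOn_const

lemma Phi_inv_int {n : ℕ} {t0 T : ℝ} (hT : t0 ≤ T) {a : ℕ → ℝ → ℝ}
    {Φ : ℝ → Matrix (Fin n) (Fin n) ℝ} (hΦ : IsFundamental n t0 T (triA n a) Φ)
    {b : ℝ → Fin n → ℝ} (hb : ∀ i, IntervalIntegrable (fun s => b s i) volume t0 T) (j : Fin n) :
    IntervalIntegrable (fun s => ((Φ s)⁻¹).mulVec (b s) j) volume t0 T := by
  have h := IntervalIntegrable.sum (μ := volume) (a := t0) (b := T) Finset.univ
    (f := fun k s => (Φ s)⁻¹ j k * b s k)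
    (fun k _ => cont_mul_int hT (hb k) (PhiInv_cont hΦ j k))
  refine h.congr ?_
  intro s _
  simp [Matrix.mulVec, dotProduct]

lemma var_const {n : ℕ} {t0 T : ℝ} (hT : t0 ≤ T) {a : ℕ → ℝ → ℝ}
    (ha : ∀ l, 2 ≤ l → l ≤ n → IntervalIntegrable (a l) volume t0 T)
    {Φ : ℝ → Matrix (Fin n) (Fin n) ℝ} (hΦ : IsFundamental n t0 T (triA n a) Φ)
    {b : ℝ → Fin n → ℝ} (hb : ∀ i, IntervalIntegrable (fun s => b s i) volume t0 T)
    (c : Fin n → ℝ) {u w : ℝ → Fin n → ℝ}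
    (hu : ∀ t, u t = fun j => c j + ∫ s in t0..t, ((Φ s)⁻¹).mulVec (b s) j)
    (hw : ∀ t, w t = (Φ t).mulVec (u t)) :
    (∀ i, ContinuousOn (fun t => w t i) (Icc t0 T)) ∧
    ∀ t ∈ Icc t0 T, ∀ i, w t i = c i + ∫ s in t0..t, ((triA n a s).mulVec (w s) i + b s i) := by
  have hr := Phi_inv_int hT hΦ hb
  have huc : ∀ j, ContinuousOn (fun t => u t j) (Icc t0 T) := by
    intro j
    simp only [hu]
    exact continuousOn_const.add (contOn_prim hT (hr j))
  have hPj : ∀ i j : Fin n, IntervalIntegrable (fun s => (triA n a s * Φ s) i j) volume t0 T :=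
    fun i j => triA_mulVec_int hT ha (x := fun s k => Φ s k j) (fun k => hΦ.1 k j) i
  have ht0 : Φ t0 = 1 := Phi_t0 hT hΦ
  have hu0 : ∀ j, u t0 j = c j := fun j => by simp [hu]
  constructor
  · intro i
    simp only [hw, Matrix.mulVec, dotProduct]
    exact continuousOn_finsetSum _ fun j _ => (hΦ.1 i j).mul (huc j)
  · intro t ht i
    have step : ∀ j : Fin n, Φ t i j * u t j = Φ t0 i j * u t0 j
        + ∫ s in t0..t, ((triA n a s * Φ s) i j * u s j
            + Φ s i j * ((Φ s)⁻¹).mulVec (b s) j) := by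
      intro j
      refine prod_rule (P := fun t => Φ t i j) (Q := fun t => u t j) (hPj i j) (hr j) ?_ ?_ t ht
      · intro t ht
        simp only [ht0]
        exact hΦ.2 t ht i j
      · intro t ht
        rw [hu0]; simp only [hu]
    have e1 : w t i = ∑ j, Φ t i j * u t j := by rw [hw]; rfl
    rw [e1, Finset.sum_congr rfl (fun j _ => step j), Finset.sum_add_distrib,
      ← intervalIntegral.integral_finsetSum]
    · congr 1
      · simp [ht0, hu0, Matrix.one_apply]
      · apply integral_congr_Icc ht.1
        intro s hs
        have hs' : s ∈ Icc t0 T := ⟨hs.1, hs.2.trans ht.2⟩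
        rw [Finset.sum_add_distrib]
        have h1 : ∑ j, (triA n a s * Φ s) i j * u s j = (triA n a s).mulVec (w s) i := by
          rw [hw, Matrix.mulVec_mulVec]; rfl
        have h2 : ∑ j, Φ s i j * ((Φ s)⁻¹).mulVec (b s) j = b s i := by
          have : (Φ s).mulVec (((Φ s)⁻¹).mulVec (b s)) = b s := by
            rw [Matrix.mulVec_mulVec, Matrix.mul_nonsing_inv _ (by simp [Phi_det hΦ hs']),
              Matrix.one_mulVec]
          exact congrFun this i
        rw [h1, h2]
    · intro j _
      refine intInt_mono ?_ ht
      exact (int_mul_cont hT (hPj i j) (huc j)).add (cont_mul_int hT (hr j) (hΦ.1 i j))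

lemma sol_formula {n : ℕ} {t0 T M : ℝ} (hT : t0 ≤ T) (hM : 0 ≤ M) {a : ℕ → ℝ → ℝ}
    (ha : ∀ l, 2 ≤ l → l ≤ n → IntervalIntegrable (a l) volume t0 T)
    (haM : ∀ l, 2 ≤ l → l ≤ n → ∀ t ∈ Icc t0 T, |a l t| ≤ M)
    {Φ : ℝ → Matrix (Fin n) (Fin n) ℝ} (hΦ : IsFundamental n t0 T (triA n a) Φ)
    {b : ℝ → Fin n → ℝ} (hb : ∀ i, IntervalIntegrable (fun s => b s i) volume t0 T)
    {x : ℝ → Fin n → ℝ} (hxc : ContinuousOn x (Icc t0 T))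
    (hx : ∀ t ∈ Icc t0 T, ∀ i,
      x t i = x t0 i + ∫ s in t0..t, ((triA n a s).mulVec (x s) i + b s i)) :
    ∀ t ∈ Icc t0 T, x t = (Φ t).mulVec (x t0)
      + (Φ t).mulVec (fun j => ∫ s in t0..t, ((Φ s)⁻¹).mulVec (b s) j) := by
  obtain ⟨u, hu⟩ : ∃ u : ℝ → Fin n → ℝ, ∀ t, u t =
    fun j => x t0 j + ∫ s in t0..t, ((Φ s)⁻¹).mulVec (b s) j := ⟨_, fun _ => rfl⟩
  obtain ⟨w, hw⟩ : ∃ w : ℝ → Fin n → ℝ, ∀ t, w t = (Φ t).mulVec (u t) := ⟨_, fun _ => rfl⟩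
  obtain ⟨hwc, hwe⟩ := var_const hT ha hΦ hb (x t0) hu hw
  have hxc' : ∀ i, ContinuousOn (fun t => x t i) (Icc t0 T) := fun i => continuousOn_pi.1 hxc i
  have hd : ∀ t ∈ Icc t0 T, ∀ i, x t i - w t i
      = ∫ s in t0..t, ((triA n a s).mulVec (fun k => x s k - w s k) i + (0 : ℝ)) := by
    intro t ht i
    rw [hx t ht i, hwe t ht i, add_sub_add_left_eq_sub, ← intervalIntegral.integral_sub]
    · apply integral_congr_Icc ht.1
      intro s hs
      have : (fun k => x s k - w s k) = x s - w s := rfl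
      simp only [this, Matrix.mulVec_sub, Pi.sub_apply]
      ring
    · exact intInt_mono ((triA_mulVec_int hT ha hxc' i).add (hb i)) ht
    · exact intInt_mono ((triA_mulVec_int hT ha hwc i).add (hb i)) ht
  intro t ht
  have : x t = w t := by
    ext i
    have := growth (β := 0) (q := fun t k => x t k - w t k) (b := fun _ _ => 0) hM le_rfl haM hd
      (fun _ _ _ _ => rfl) (fun _ _ _ _ => by simp) (n - 1 - i) i (by omega) t ht
    simp only [mul_zero, zero_mul] at this
    exact sub_eq_zero.1 (abs_nonpos_iff.1 this)
  rw [this, hw, ← Matrix.mulVec_add, hu]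
  rfl

section C
variable {n : ℕ}

lemma triC_mul (o : Fin n) (ho : (o : ℕ) = 0) (P : Matrix (Fin n) (Fin n) ℝ) (j : Fin n)
    (k : Fin 1) : (triC n * P) k j = P o j := by
  rw [Matrix.mul_apply, Finset.sum_eq_single o]
  · simp [triC, ho]
  · intro b _ hb
    have : (b : ℕ) ≠ 0 := fun h => hb (Fin.ext (h.trans ho.symm))
    simp [triC, this]
  · simp

lemma PCCP (o : Fin n) (ho : (o : ℕ) = 0) (P : Matrix (Fin n) (Fin n) ℝ) (i j : Fin n) :
    (Pᵀ * (triC n)ᵀ * triC n * P) i j = P o i * P o j := by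
  rw [Matrix.mul_assoc, ← Matrix.transpose_mul, Matrix.mul_apply]
  simp [triC_mul o ho]

lemma PCCP_mulVec (o : Fin n) (ho : (o : ℕ) = 0) (P : Matrix (Fin n) (Fin n) ℝ) (v : Fin n → ℝ)
    (i : Fin n) : (Pᵀ * (triC n)ᵀ * triC n * P).mulVec v i = P o i * P.mulVec v o := by
  simp only [Matrix.mulVec, dotProduct, PCCP o ho, Finset.mul_sum, mul_assoc]

lemma PC_mulVec (o : Fin n) (ho : (o : ℕ) = 0) (P : Matrix (Fin n) (Fin n) ℝ) (y : ℝ)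
    (i : Fin n) : (Pᵀ * (triC n)ᵀ).mulVec (fun _ => y) i = P o i * y := by
  rw [← Matrix.transpose_mul]
  simp [Matrix.mulVec, dotProduct, triC_mul o ho]

end C

lemma Psi_mulVec {n : ℕ} {t0 T : ℝ} (hT : t0 ≤ T) (o : Fin n) (ho : (o : ℕ) = 0)
    {A : ℝ → Matrix (Fin n) (Fin n) ℝ} {Φ : ℝ → Matrix (Fin n) (Fin n) ℝ}
    (hΦ : IsFundamental n t0 T A Φ) (w : Fin n → ℝ) (i : Fin n) :
    (Psi n 1 t0 (fun _ => triC n) Φ T).mulVec w i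
      = ∫ s in t0..T, Φ s o i * (Φ s).mulVec w o := by
  have : ∀ s, Φ s o i * (Φ s).mulVec w o = ∑ j, Φ s o i * Φ s o j * w j := by
    intro s
    simp only [Matrix.mulVec, dotProduct, Finset.mul_sum, mul_assoc]
  simp only [this]
  rw [intervalIntegral.integral_finsetSum]
  · simp only [Matrix.mulVec, dotProduct, Psi, PCCP o ho, intervalIntegral.integral_mul_const]
  · intro j _
    exact contOn_int hT (((hΦ.1 o i).mul (hΦ.1 o j)).mul continuousOn_const)

lemma F_diff {n : ℕ} {t0 T M : ℝ} (hT : t0 ≤ T) (hM : 0 ≤ M) {a : ℕ → ℝ → ℝ}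
    (ha : ∀ l, 2 ≤ l → l ≤ n → IntervalIntegrable (a l) volume t0 T)
    (haM : ∀ l, 2 ≤ l → l ≤ n → ∀ t ∈ Icc t0 T, |a l t| ≤ M)
    {Φ : ℝ → Matrix (Fin n) (Fin n) ℝ} (hΦ : IsFundamental n t0 T (triA n a) Φ)
    (o : Fin n) (ho : (o : ℕ) = 0)
    (hU : IsUnit (Psi n 1 t0 (fun _ => triC n) Φ T))
    {g : ℝ → (Fin n → ℝ) → (Fin n → ℝ)} {x z : ℝ → Fin n → ℝ} {y : ℝ → ℝ}
    (hbx : ∀ i, IntervalIntegrable (fun s => g s (x s) i) volume t0 T)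
    (hbz : ∀ i, IntervalIntegrable (fun s => g s (z s) i) volume t0 T)
    (hx : IsSolution n t0 T (triA n a) g x)
    (hy : ∀ t ∈ Icc t0 T, x t o = y t)
    (hyc : ContinuousOn y (Icc t0 T)) :
    ∃ (w : Fin n → ℝ) (q : ℝ → Fin n → ℝ),
      (∀ i, ContinuousOn (fun t => q t i) (Icc t0 T)) ∧
      (∀ t ∈ Icc t0 T, ∀ i, q t i = ∫ s in t0..t, ((triA n a s).mulVec (q s) i
          + (g s (z s) i - g s (x s) i))) ∧
      (∀ i, (Psi n 1 t0 (fun _ => triC n) Φ T).mulVec w i = - ∫ s in t0..T, Φ s o i * q s o) ∧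
      (∀ t ∈ Icc t0 T, Fmap n 1 t0 (fun _ => triC n) Φ g (fun s _ => y s) T z t - x t
        = (Φ t).mulVec w + q t) := by
  have hrx := Phi_inv_int hT hΦ hbx
  have hrz := Phi_inv_int hT hΦ hbz
  have hsol := sol_formula hT hM ha haM hΦ hbx hx.1 hx.2
  set ux : ℝ → Fin n → ℝ := fun t j => ∫ s in t0..t, ((Φ s)⁻¹).mulVec (g s (x s)) j with hux
  set uz : ℝ → Fin n → ℝ := fun t j => ∫ s in t0..t, ((Φ s)⁻¹).mulVec (g s (z s)) j with huz
  obtain ⟨u, hu⟩ : ∃ u : ℝ → Fin n → ℝ, ∀ t, u t =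
    fun j => (0 : Fin n → ℝ) j + ∫ s in t0..t, ((Φ s)⁻¹).mulVec (g s (z s) - g s (x s)) j :=
    ⟨_, fun _ => rfl⟩
  obtain ⟨q, hq⟩ : ∃ q : ℝ → Fin n → ℝ, ∀ t, q t = (Φ t).mulVec (u t) := ⟨_, fun _ => rfl⟩
  obtain ⟨hqc, hqe⟩ := var_const (b := fun s => g s (z s) - g s (x s)) hT ha hΦ
    (fun i => (hbz i).sub (hbx i)) 0 hu hq
  have huu : ∀ t ∈ Icc t0 T, u t = uz t - ux t := by
    intro t ht
    rw [hu]
    ext j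
    simp only [Pi.zero_apply, zero_add, Pi.sub_apply, hux, huz]
    rw [← intervalIntegral.integral_sub (intInt_mono (hrz j) ht) (intInt_mono (hrx j) ht)]
    simp only [Matrix.mulVec_sub, Pi.sub_apply]
  have hsol' : ∀ t ∈ Icc t0 T, x t = (Φ t).mulVec (x t0) + (Φ t).mulVec (ux t) := hsol
  set Ψ := Psi n 1 t0 (fun _ => triC n) Φ T with hΨ
  have hdet : IsUnit Ψ.det := (Matrix.isUnit_iff_isUnit_det _).1 hU
  set r : Fin n → ℝ := (fun i => ∫ ρ in t0..T, ((Φ ρ)ᵀ * (triC n)ᵀ).mulVec (fun _ => y ρ) i)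
          - Xi n 1 t0 (fun _ => triC n) Φ g z T with hr
  have hmc : ∀ v : Fin n → ℝ, ContinuousOn (fun s => (Φ s).mulVec v o) (Icc t0 T) := by
    intro v
    simp only [Matrix.mulVec, dotProduct]
    exact continuousOn_finsetSum _ fun j _ => (hΦ.1 o j).mul continuousOn_const
  have hzc : ContinuousOn (fun s => (Φ s).mulVec (uz s) o) (Icc t0 T) := by
    simp only [Matrix.mulVec, dotProduct]
    exact continuousOn_finsetSum _ fun j _ => (hΦ.1 o j).mul (contOn_prim hT (hrz j))
  have hri : ∀ i, r i = Ψ.mulVec (x t0) i - ∫ s in t0..T, Φ s o i * q s o := by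
    intro i
    have e1 : r i = (∫ ρ in t0..T, Φ ρ o i * y ρ)
        - ∫ ρ in t0..T, Φ ρ o i * (Φ ρ).mulVec (uz ρ) o := by
      simp only [hr, Pi.sub_apply, PC_mulVec o ho, Xi, PCCP_mulVec o ho]
      rfl
    rw [e1, hΨ, Psi_mulVec hT o ho hΦ, ← intervalIntegral.integral_sub,
      ← intervalIntegral.integral_sub]
    · apply integral_congr_Icc hT
      intro s hs
      rw [← hy s hs, hsol' s hs, hq, huu s hs, Matrix.mulVec_sub]
      simp only [Pi.add_apply, Pi.sub_apply]
      ring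
    · exact contOn_int hT ((hΦ.1 o i).mul (hmc _))
    · exact contOn_int hT ((hΦ.1 o i).mul (hqc o))
    · exact contOn_int hT ((hΦ.1 o i).mul hyc)
    · exact contOn_int hT ((hΦ.1 o i).mul hzc)
  refine ⟨Ψ⁻¹.mulVec r - x t0, q, hqc, ?_, ?_, ?_⟩
  · intro t ht i
    have := hqe t ht i
    simpa using this
  · intro i
    rw [Matrix.mulVec_sub, Matrix.mulVec_mulVec, Matrix.mul_nonsing_inv _ hdet, Matrix.one_mulVec,
      Pi.sub_apply, hri]
    ring
  · intro t ht
    rw [hsol' t ht, hq, huu t ht]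
    change (Φ t).mulVec (Ψ⁻¹.mulVec r) + (Φ t).mulVec (uz t)
      - ((Φ t).mulVec (x t0) + (Φ t).mulVec (ux t)) = _
    clear_value r
    rw [Matrix.mulVec_sub, Matrix.mulVec_sub]
    abel


lemma prim_asymp {t0 T c : ℝ} (hT : t0 < T) {r : ℝ → ℝ} (hr : IntervalIntegrable r volume t0 T)
    (k : ℕ) (h : Tendsto (fun s => r s / (s - t0) ^ k) (𝓝[>] t0) (𝓝 c)) :
    Tendsto (fun t => (∫ s in t0..t, r s) / (t - t0) ^ (k + 1)) (𝓝[>] t0) (𝓝 (c / (k + 1))) := by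
  rw [Metric.tendsto_nhds] at h ⊢
  intro ε hε
  have h1 := h (ε / 2) (by linarith)
  obtain ⟨d, hd, hsub⟩ := (mem_nhdsGT_iff_exists_Ioo_subset).1 h1
  have hmin : t0 < min d T := lt_min hd hT
  filter_upwards [Ioo_mem_nhdsGT hmin] with t ht
  have htd : t < d := lt_of_lt_of_le ht.2 (min_le_left _ _)
  have htT : t < T := lt_of_lt_of_le ht.2 (min_le_right _ _)
  have hpos : 0 < t - t0 := by linarith [ht.1]
  have hpowint : ∫ s in t0..t, c * (s - t0) ^ k = c / (k + 1) * (t - t0) ^ (k + 1) := by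
    rw [intervalIntegral.integral_const_mul,
      intervalIntegral.integral_comp_sub_right (fun s => s ^ k) t0, integral_pow]
    simp
    ring
  have hdiff : (∫ s in t0..t, r s) - c / (k + 1) * (t - t0) ^ (k + 1)
      = ∫ s in t0..t, (r s - c * (s - t0) ^ k) := by
    rw [intervalIntegral.integral_sub (intInt_mono hr ⟨ht.1.le, htT.le⟩), hpowint]
    exact Continuous.intervalIntegrable (by fun_prop) _ _
  have hb : ‖∫ s in t0..t, (r s - c * (s - t0) ^ k)‖ ≤ (ε / 2 * (t - t0) ^ k) * |t - t0| := by
    apply intervalIntegral.norm_integral_le_of_norm_le_const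
    intro s hs
    rw [uIoc_of_le ht.1.le] at hs
    have hs0 : 0 < s - t0 := by linarith [hs.1]
    have h2 : dist (r s / (s - t0) ^ k) c < ε / 2 := hsub ⟨hs.1, lt_of_le_of_lt hs.2 htd⟩
    rw [Real.dist_eq] at h2
    have h3 : r s - c * (s - t0) ^ k = (r s / (s - t0) ^ k - c) * (s - t0) ^ k := by
      field_simp
    rw [h3, Real.norm_eq_abs, abs_mul, abs_of_pos (pow_pos hs0 k)]
    apply mul_le_mul h2.le _ (by positivity) (by linarith)
    exact pow_le_pow_left₀ hs0.le (by linarith [hs.2]) _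
  rw [← hdiff, abs_of_pos hpos, Real.norm_eq_abs] at hb
  rw [Real.dist_eq]
  have h4 : (∫ s in t0..t, r s) / (t - t0) ^ (k + 1) - c / (k + 1)
      = ((∫ s in t0..t, r s) - c / (k + 1) * (t - t0) ^ (k + 1)) / (t - t0) ^ (k + 1) := by
    field_simp
  rw [h4, abs_div, abs_of_pos (pow_pos hpos (k + 1)), div_lt_iff₀ (pow_pos hpos _)]
  have : 0 < (t - t0) ^ (k + 1) := by positivity
  calc _ ≤ _ := hb
    _ = ε / 2 * (t - t0) ^ (k + 1) := by ring
    _ < _ := by nlinarith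

lemma Phi_asymp {n : ℕ} {t0 τ : ℝ} (hτ : t0 < τ) {a : ℕ → ℝ → ℝ} {α : ℕ → ℝ}
    (ha : ∀ l, 2 ≤ l → l ≤ n → IntervalIntegrable (a l) volume t0 τ)
    (hα : ∀ l, 2 ≤ l → l ≤ n → Tendsto (a l) (𝓝[>] t0) (𝓝 (α l)) ∧ α l ≠ 0)
    {Φ : ℝ → Matrix (Fin n) (Fin n) ℝ} (hΦ : IsFundamental n t0 τ (triA n a) Φ) :
    ∀ k : ℕ, ∀ i j : Fin n, (i : ℕ) + k = j →
      ∃ γ : ℝ, γ ≠ 0 ∧ Tendsto (fun t => Φ t i j / (t - t0) ^ k) (𝓝[>] t0) (𝓝 γ) := by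
  intro k
  induction k with
  | zero =>
    intro i j hij
    refine ⟨1, one_ne_zero, ?_⟩
    have hij' : i = j := Fin.ext (by omega)
    subst hij'
    refine tendsto_const_nhds.congr' ?_
    filter_upwards [Ioo_mem_nhdsGT hτ] with t ht
    rw [Phi_lower hΦ (n - 1 - i) i (by omega) t ⟨ht.1.le, ht.2.le⟩ i le_rfl]
    simp
  | succ k ih =>
    intro i j hij
    have hin : (i : ℕ) + 1 < n := by omega
    obtain ⟨γ, hγ, hlim⟩ := ih ⟨i + 1, hin⟩ j (by simp; omega)
    obtain ⟨hal, hα0⟩ := hα (i + 2) (by omega) (by omega)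
    refine ⟨α (i + 2) * γ / (k + 1), by positivity, ?_⟩
    have hp := prim_asymp (r := fun s => a (i + 2) s * Φ s ⟨i + 1, hin⟩ j) hτ
      (int_mul_cont hτ.le (ha (i + 2) (by omega) (by omega)) (hΦ.1 _ _)) k
      ((hal.mul hlim).congr fun s => by ring)
    refine hp.congr' ?_
    filter_upwards [Ioo_mem_nhdsGT hτ] with t ht
    rw [hΦ.2 t ⟨ht.1.le, ht.2.le⟩ i j, Matrix.one_apply_ne, zero_add]
    · simp only [triA_mul, dif_pos hin]
    · intro h
      have := congrArg Fin.val h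
      omega

lemma poly_lb (n : ℕ) (hn : 0 < n) : ∃ c > (0 : ℝ), ∀ v : Fin n → ℝ,
    c * ‖v‖ ^ 2 ≤ ∫ u in (0 : ℝ)..1, (∑ j : Fin n, v j * u ^ (j : ℕ)) ^ 2 := by
  have : Nonempty (Fin n) := ⟨⟨0, hn⟩⟩
  set J : (Fin n → ℝ) → ℝ := fun v => ∫ u in (0 : ℝ)..1, (∑ j : Fin n, v j * u ^ (j : ℕ)) ^ 2
    with hJ
  have hJc : Continuous J := by
    apply intervalIntegral.continuous_parametric_intervalIntegral_of_continuous'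
    simp only [Function.uncurry_def]
    fun_prop
  have hJpos : ∀ v, v ≠ 0 → 0 < J v := by
    intro v hv
    apply intervalIntegral.integral_pos (by norm_num)
    · fun_prop
    · intro u _; positivity
    · by_contra! hcon
      apply hv
      set p : Polynomial ℝ := ∑ j : Fin n, Polynomial.C (v j) * Polynomial.X ^ (j : ℕ) with hp
      have hp0 : p = 0 := by
        apply Polynomial.eq_zero_of_infinite_isRoot
        refine Set.Infinite.mono ?_ (Set.Icc_infinite (show (0 : ℝ) < 1 by norm_num))
        intro u hu
        have h1 := hcon u hu
        have h2 : (∑ j : Fin n, v j * u ^ (j : ℕ)) = 0 := by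
          have := sq_nonneg (∑ j : Fin n, v j * u ^ (j : ℕ))
          exact pow_eq_zero_iff (two_ne_zero) |>.1 (le_antisymm h1 this)
        simp only [Set.mem_ofPred_eq, Polynomial.IsRoot, hp, Polynomial.eval_finsetSum,
          Polynomial.eval_mul, Polynomial.eval_C, Polynomial.eval_pow, Polynomial.eval_X, h2]
      ext j
      have h3 := congrArg (fun q => Polynomial.coeff q (j : ℕ)) hp0
      simp only [hp, Polynomial.finsetSum_coeff, Polynomial.coeff_C_mul, Polynomial.coeff_X_pow,
        Polynomial.coeff_zero, mul_ite, mul_one, mul_zero] at h3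
      rw [Finset.sum_eq_single j] at h3
      · simpa using h3
      · intro b _ hb
        rw [if_neg]
        intro h
        exact hb (Fin.ext h.symm)
      · simp
  obtain ⟨v0, hv0, hmin⟩ := (isCompact_sphere (0 : Fin n → ℝ) 1).exists_isMinOn
    (NormedSpace.sphere_nonempty.2 zero_le_one) hJc.continuousOn
  have hv0' : v0 ≠ 0 := by
    rintro rfl
    simp at hv0
  refine ⟨J v0, hJpos v0 hv0', ?_⟩
  intro v
  by_cases hv : v = 0
  · subst hv; simp
  have hvn : ‖v‖ ≠ 0 := norm_ne_zero_iff.2 hv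
  have h1 : J v0 ≤ J (‖v‖⁻¹ • v) := hmin (by simp [norm_smul, hvn])
  have h2 : J (‖v‖⁻¹ • v) = (‖v‖⁻¹) ^ 2 * J v := by
    simp only [hJ]
    rw [← intervalIntegral.integral_const_mul]
    congr 1
    ext u
    rw [← mul_pow, Finset.mul_sum]
    simp only [Pi.smul_apply, smul_eq_mul, mul_assoc]
  rw [h2] at h1
  change J v0 * ‖v‖ ^ 2 ≤ J v
  calc J v0 * ‖v‖ ^ 2 ≤ (‖v‖⁻¹) ^ 2 * J v * ‖v‖ ^ 2 := by gcongr
    _ = J v := by field_simp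

lemma lower {n : ℕ} {t0 τ : ℝ} (hτ : t0 < τ) {a : ℕ → ℝ → ℝ} {α : ℕ → ℝ}
    (ha : ∀ l, 2 ≤ l → l ≤ n → IntervalIntegrable (a l) volume t0 τ)
    (hα : ∀ l, 2 ≤ l → l ≤ n → Tendsto (a l) (𝓝[>] t0) (𝓝 (α l)) ∧ α l ≠ 0)
    {Φ : ℝ → Matrix (Fin n) (Fin n) ℝ} (hΦ : IsFundamental n t0 τ (triA n a) Φ)
    (o : Fin n) (ho : (o : ℕ) = 0) :
    ∃ δ > (0 : ℝ), t0 + δ ≤ τ ∧ ∃ c > (0 : ℝ), ∀ h ∈ Ioc 0 δ, ∀ (w : Fin n → ℝ) (j : Fin n),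
      c * h * (w j * h ^ (j : ℕ)) ^ 2 ≤ ∫ s in t0..(t0 + h), ((Φ s).mulVec w o) ^ 2 := by
  have hn : 0 < n := o.pos
  have : Nonempty (Fin n) := ⟨o⟩
  choose γ hγ hlim using fun j : Fin n => Phi_asymp hτ ha hα hΦ j o j (by omega)
  obtain ⟨j0, hj0⟩ := Finite.exists_min (fun j => |γ j|)
  set m := |γ j0| with hm
  have hm0 : 0 < m := abs_pos.2 (hγ j0)
  obtain ⟨c0, hc0, hpoly⟩ := poly_lb n hn
  set ε := m * √c0 / (2 * n) with hεd
  have hn' : (0 : ℝ) < n := by exact_mod_cast hn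
  have hε : 0 < ε := by positivity
  have hε2 : (n * ε) ^ 2 = m ^ 2 * c0 / 4 := by
    have : n * ε = m * √c0 / 2 := by rw [hεd]; field_simp
    rw [this, div_pow, mul_pow, Real.sq_sqrt hc0.le]; norm_num
  have hev : ∀ᶠ t in 𝓝[>] t0, ∀ j : Fin n, |Φ t o j / (t - t0) ^ (j : ℕ) - γ j| < ε := by
    rw [eventually_all]
    intro j
    have := (Metric.tendsto_nhds.1 (hlim j)) ε hε
    simpa only [Real.dist_eq] using this
  obtain ⟨d, hd, hsub⟩ := (mem_nhdsGT_iff_exists_Ioo_subset).1 hev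
  have hd' : t0 < d := hd
  have hmin : 0 < min (d - t0) (τ - t0) := lt_min (by linarith) (by linarith)
  refine ⟨min (d - t0) (τ - t0) / 2, by linarith, ?_, c0 * m ^ 2 / 4, by positivity, ?_⟩
  · linarith [min_le_right (d - t0) (τ - t0)]
  intro h hh w j
  have hh0 : 0 < h := hh.1
  have hhd : t0 + h < d := by linarith [min_le_left (d - t0) (τ - t0), hh.2]
  have hhτ : t0 + h < τ := by linarith [min_le_right (d - t0) (τ - t0), hh.2]
  set W := ‖fun j : Fin n => w j * h ^ (j : ℕ)‖ with hW
  have hWj : ∀ j : Fin n, |w j| * h ^ (j : ℕ) ≤ W := by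
    intro j
    have := norm_le_pi_norm (fun j : Fin n => w j * h ^ (j : ℕ)) j
    simpa [abs_mul, abs_of_pos hh0] using this
  have hW0 : 0 ≤ W := norm_nonneg _
  set v : Fin n → ℝ := fun j => γ j * (w j * h ^ (j : ℕ)) with hv
  have hvW : m * W ≤ ‖v‖ := by
    have : W ≤ ‖v‖ / m := by
      rw [hW, pi_norm_le_iff_of_nonneg (by positivity)]
      intro j
      rw [le_div_iff₀ hm0]
      have h1 := norm_le_pi_norm v j
      refine le_trans ?_ h1
      change ‖w j * h ^ (j : ℕ)‖ * m ≤ ‖γ j * (w j * h ^ (j : ℕ))‖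
      rw [norm_mul (γ j), mul_comm]
      exact mul_le_mul_of_nonneg_right (hj0 j) (norm_nonneg _)
    rw [le_div_iff₀ hm0] at this
    linarith
  have hcov : ∫ s in t0..(t0 + h), ((Φ s).mulVec w o) ^ 2
      = h * ∫ u in (0 : ℝ)..1, ((Φ (t0 + h * u)).mulVec w o) ^ 2 := by
    rw [intervalIntegral.integral_comp_add_mul (fun s => ((Φ s).mulVec w o) ^ 2) hh0.ne' t0]
    simp [hh0.ne']
  have hmap : ∀ u ∈ Icc (0 : ℝ) 1, t0 + h * u ∈ Icc t0 τ := by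
    intro u hu
    constructor
    · nlinarith [hu.1]
    · nlinarith [hu.2]
  have hcont : ContinuousOn (fun u => ((Φ (t0 + h * u)).mulVec w o) ^ 2) (Icc (0 : ℝ) 1) := by
    have h1 : ContinuousOn (fun s => ((Φ s).mulVec w o) ^ 2) (Icc t0 τ) := by
      simp only [Matrix.mulVec, dotProduct]
      exact (continuousOn_finsetSum _ fun j _ => (hΦ.1 o j).mul continuousOn_const).pow 2
    exact h1.comp (by fun_prop) hmap
  have hpt : ∀ u ∈ Ioo (0 : ℝ) 1, (1 / 2) * (∑ j : Fin n, v j * u ^ (j : ℕ)) ^ 2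
      - (n * ε * W) ^ 2 ≤ ((Φ (t0 + h * u)).mulVec w o) ^ 2 := by
    intro u hu
    have hhu : 0 < h * u := mul_pos hh0 hu.1
    have hs : ∀ j : Fin n, |Φ (t0 + h * u) o j / (t0 + h * u - t0) ^ (j : ℕ) - γ j| < ε :=
      hsub ⟨by linarith, by nlinarith [hu.2]⟩
    have he : |(Φ (t0 + h * u)).mulVec w o - ∑ j : Fin n, v j * u ^ (j : ℕ)| ≤ n * ε * W := by
      simp only [Matrix.mulVec, dotProduct]
      rw [← Finset.sum_sub_distrib]
      refine (Finset.abs_sum_le_sum_abs _ _).trans ?_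
      have : ∀ j ∈ (Finset.univ : Finset (Fin n)),
          |Φ (t0 + h * u) o j * w j - v j * u ^ (j : ℕ)| ≤ ε * W := by
        intro j _
        have e1 : Φ (t0 + h * u) o j * w j - v j * u ^ (j : ℕ)
            = (Φ (t0 + h * u) o j / (t0 + h * u - t0) ^ (j : ℕ) - γ j)
              * (w j * h ^ (j : ℕ)) * u ^ (j : ℕ) := by
          have hne : h ^ (j : ℕ) ≠ 0 := by positivity
          have hnu : u ^ (j : ℕ) ≠ 0 := pow_ne_zero _ hu.1.ne'
          rw [add_sub_cancel_left, mul_pow]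
          simp only [hv]
          field_simp
        rw [e1, abs_mul, abs_mul, abs_mul, abs_of_pos (pow_pos hh0 _), abs_of_pos (pow_pos hu.1 _)]
        have hu1 : u ^ (j : ℕ) ≤ 1 := pow_le_one₀ hu.1.le hu.2.le
        have hu0 : 0 ≤ u ^ (j : ℕ) := pow_nonneg hu.1.le _
        calc _ ≤ ε * W * 1 := by
              apply mul_le_mul _ hu1 hu0 (by positivity)
              exact mul_le_mul (hs j).le (hWj j) (by positivity) hε.le
          _ = _ := by ring
      refine (Finset.sum_le_sum this).trans ?_
      simp [mul_assoc]
    have he2 := sq_le_sq' (by linarith [abs_le.1 he]) (abs_le.1 he).2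
    nlinarith [sq_nonneg ((Φ (t0 + h * u)).mulVec w o
      + ((Φ (t0 + h * u)).mulVec w o - ∑ j : Fin n, v j * u ^ (j : ℕ)))]
  have hmono := intervalIntegral.integral_mono_on_of_le_Ioo (μ := volume) (zero_le_one' ℝ)
    (Continuous.intervalIntegrable (by fun_prop) _ _) (contOn_int zero_le_one hcont) hpt
  rw [intervalIntegral.integral_sub (Continuous.intervalIntegrable (by fun_prop) _ _)
    (Continuous.intervalIntegrable (by fun_prop) _ _), intervalIntegral.integral_const_mul] at hmono
  simp only [intervalIntegral.integral_const, sub_zero, one_smul] at hmono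
  have hp := hpoly v
  have hvW2 : (m * W) ^ 2 ≤ ‖v‖ ^ 2 := pow_le_pow_left₀ (by positivity) hvW 2
  have hlow : c0 * m ^ 2 / 4 * W ^ 2 ≤ ∫ u in (0 : ℝ)..1, ((Φ (t0 + h * u)).mulVec w o) ^ 2 := by
    have e3 : (n * ε * W) ^ 2 = m ^ 2 * c0 / 4 * W ^ 2 := by rw [mul_pow, hε2]
    rw [e3] at hmono
    have e4 : c0 * (m * W) ^ 2 ≤ c0 * ‖v‖ ^ 2 := mul_le_mul_of_nonneg_left hvW2 hc0.le
    nlinarith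
  rw [hcov]
  have hwW : (w j * h ^ (j : ℕ)) ^ 2 ≤ W ^ 2 := by
    rw [← sq_abs, abs_mul, abs_of_pos (pow_pos hh0 _)]
    exact pow_le_pow_left₀ (by positivity) (hWj j) 2
  calc _ ≤ h * (c0 * m ^ 2 / 4 * W ^ 2) := by
        have : 0 ≤ c0 * m ^ 2 / 4 * h := by positivity
        nlinarith [mul_le_mul_of_nonneg_left hwW this]
    _ ≤ _ := mul_le_mul_of_nonneg_left hlow hh0.le


lemma int_of_bdd {t0 T M : ℝ} (hT : t0 ≤ T) {p : ℝ → ℝ}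
    (hm : AEStronglyMeasurable p (volume.restrict (Icc t0 T)))
    (hb : ∀ s ∈ Icc t0 T, |p s| ≤ M) : IntervalIntegrable p volume t0 T := by
  rw [intervalIntegrable_iff_integrableOn_Icc_of_le hT]
  refine IntegrableOn.of_bound (by simp) hm M ?_
  filter_upwards [ae_restrict_mem measurableSet_Icc] with s hs
  exact hb s hs

lemma g_int {n : ℕ} {t0 τ T ρ : ℝ} (hT : t0 ≤ T) (hTτ : T ≤ τ)
    {a f : ℕ → ℝ → ℝ} {fn : ℝ → (Fin n → ℝ) → ℝ}
    (hreg : TriRegular n t0 τ a f fn) (hρ : 0 < ρ)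
    (hfnbdd : ∀ R > (0:ℝ), ∃ M : ℝ, ∀ t ∈ Set.Icc t0 τ, ∀ v : Fin n → ℝ,
      ‖v‖ ≤ R → |fn t v| ≤ M)
    {z : ℝ → Fin n → ℝ} (hz : ContinuousOn z (Icc t0 T)) (hzb : ∀ t ∈ Icc t0 T, ‖z t‖ ≤ ρ)
    (i : Fin n) : IntervalIntegrable (fun s => triG n f fn s (z s) i) volume t0 T := by
  obtain ⟨-, -, hfm, hfb, hfnm, hfnc⟩ := hreg
  have hsub : Icc t0 T ⊆ Icc t0 τ := Icc_subset_Icc_right hTτ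
  by_cases hi : (i : ℕ) = n - 1
  · simp only [triG, if_pos hi]
    obtain ⟨M, hM⟩ := hfnbdd ρ hρ
    refine int_of_bdd (M := M) hT ?_ (fun s hs => hM s (hsub hs) _ (hzb s hs))
    have hmeas : Measurable (Function.uncurry
        (fun (v : Fin n → ℝ) (s : ℝ) => (Icc t0 τ).indicator (fun s => fn s v) s)) := by
      apply measurable_uncurry_of_continuous_of_measurable
      · intro s
        by_cases hs : s ∈ Icc t0 τ
        · simpa only [Set.indicator_of_mem hs] using hfnc s hs
        · simp only [Set.indicator_of_notMem hs]
          exact continuous_const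
      · intro v
        exact (hfnm v).indicator measurableSet_Icc
    have hzm : AEMeasurable z (volume.restrict (Icc t0 T)) := hz.aemeasurable measurableSet_Icc
    have h1 := hmeas.comp_aemeasurable (hzm.prodMk aemeasurable_id)
    refine (h1.congr ?_).aestronglyMeasurable
    filter_upwards [ae_restrict_mem measurableSet_Icc] with s hs
    simp [Function.uncurry, Set.indicator_of_mem (hsub hs)]
  · simp only [triG, if_neg hi]
    obtain ⟨M, hM⟩ := hfb (i + 1) (by omega) (by omega)
    exact int_of_bdd hT (hfm (i + 1) (by omega) (by omega)).aestronglyMeasurable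
      (fun s hs => hM s (hsub hs))

lemma sum_int {n : ℕ} {t0 T : ℝ} (hT : t0 ≤ T) (o : Fin n)
    {A : ℝ → Matrix (Fin n) (Fin n) ℝ} {Φ : ℝ → Matrix (Fin n) (Fin n) ℝ}
    (hΦ : IsFundamental n t0 T A Φ) (w : Fin n → ℝ) {p : ℝ → ℝ}
    (hp : ContinuousOn p (Icc t0 T)) :
    ∑ i, w i * ∫ s in t0..T, Φ s o i * p s = ∫ s in t0..T, (Φ s).mulVec w o * p s := by
  simp only [← intervalIntegral.integral_const_mul]
  rw [← intervalIntegral.integral_finsetSum]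
  · apply integral_congr_Icc hT
    intro s _
    simp only [Matrix.mulVec, dotProduct, Finset.sum_mul]
    exact Finset.sum_congr rfl fun i _ => by ring
  · intro i _
    exact contOn_int hT (continuousOn_const.mul ((hΦ.1 o i).mul hp))

lemma mulVec_cont {n : ℕ} {t0 T : ℝ}
    {A : ℝ → Matrix (Fin n) (Fin n) ℝ} {Φ : ℝ → Matrix (Fin n) (Fin n) ℝ}
    (hΦ : IsFundamental n t0 T A Φ) (w : Fin n → ℝ) (i : Fin n) :
    ContinuousOn (fun s => (Φ s).mulVec w i) (Icc t0 T) := by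
  simp only [Matrix.mulVec, dotProduct]
  exact continuousOn_finsetSum _ fun j _ => (hΦ.1 i j).mul continuousOn_const

lemma Psi_quad {n : ℕ} {t0 T : ℝ} (hT : t0 ≤ T) (o : Fin n) (ho : (o : ℕ) = 0)
    {A : ℝ → Matrix (Fin n) (Fin n) ℝ} {Φ : ℝ → Matrix (Fin n) (Fin n) ℝ}
    (hΦ : IsFundamental n t0 T A Φ) (w : Fin n → ℝ) :
    ∑ i, w i * (Psi n 1 t0 (fun _ => triC n) Φ T).mulVec w i
      = ∫ s in t0..T, ((Φ s).mulVec w o) ^ 2 := by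
  simp only [Psi_mulVec hT o ho hΦ, pow_two]
  exact sum_int hT o hΦ w (mulVec_cont hΦ w o)

lemma contract {n : ℕ} {t0 τ : ℝ} (hτ : t0 < τ)
    {a f : ℕ → ℝ → ℝ} {fn : ℝ → (Fin n → ℝ) → ℝ}
    (hreg : TriRegular n t0 τ a f fn)
    (hfnbdd : ∀ R > (0:ℝ), ∃ M : ℝ, ∀ t ∈ Set.Icc t0 τ, ∀ v : Fin n → ℝ,
      ‖v‖ ≤ R → |fn t v| ≤ M)
    {α : ℕ → ℝ}
    (hα : ∀ l, 2 ≤ l → l ≤ n → Tendsto (a l) (𝓝[>] t0) (𝓝 (α l)) ∧ α l ≠ 0)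
    {ρ L : ℝ} (hρ : 0 < ρ) (hL : 0 ≤ L)
    (hLip : ∀ t ∈ Set.Icc t0 τ, ∀ z1 z2 : Fin n → ℝ,
      ‖z1‖ ≤ ρ → ‖z2‖ ≤ ρ → |fn t z1 - fn t z2| ≤ L * ‖z1 - z2‖)
    {Φ : ℝ → Matrix (Fin n) (Fin n) ℝ} (hΦ : IsFundamental n t0 τ (triA n a) Φ)
    {y : ℝ → ℝ} (hyc : ContinuousOn y (Icc t0 τ)) (o : Fin n) (ho : (o : ℕ) = 0) :
    ∃ δ > (0 : ℝ), t0 + δ ≤ τ ∧ ∀ T ∈ Ioc t0 (t0 + δ),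
      IsUnit (Psi n 1 t0 (fun _ => triC n) Φ T) ∧
      ∀ x, IsSolution n t0 τ (triA n a) (triG n f fn) x → (∀ t ∈ Icc t0 τ, x t o = y t) →
        (∀ t ∈ Icc t0 τ, ‖x t‖ ≤ ρ) → ∀ z : ℝ → Fin n → ℝ, ContinuousOn z (Icc t0 T) →
        (∀ t ∈ Icc t0 T, ‖z t‖ ≤ ρ) → ∀ S : ℝ, 0 ≤ S → (∀ t ∈ Icc t0 T, ‖z t - x t‖ ≤ S) →
        ContinuousOn (Fmap n 1 t0 (fun _ => triC n) Φ (triG n f fn) (fun s _ => y s) T z)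
          (Icc t0 T) ∧
        ∀ t ∈ Icc t0 T,
          ‖Fmap n 1 t0 (fun _ => triC n) Φ (triG n f fn) (fun s _ => y s) T z t - x t‖ ≤ S / 2 := by
  have hn : 0 < n := o.pos
  -- uniform bound on the coefficients
  obtain ⟨M, hM1, haM⟩ : ∃ M : ℝ, 1 ≤ M ∧
      ∀ l, 2 ≤ l → l ≤ n → ∀ t ∈ Icc t0 τ, |a l t| ≤ M := by
    have h1 : ∀ l : ℕ, ∃ M : ℝ, 0 ≤ M ∧ (2 ≤ l → l ≤ n → ∀ t ∈ Icc t0 τ, |a l t| ≤ M) := by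
      intro l
      by_cases hl : 2 ≤ l ∧ l ≤ n
      · obtain ⟨M, hM⟩ := hreg.2.1 l hl.1 hl.2
        exact ⟨|M|, abs_nonneg _, fun _ _ t ht => (hM t ht).trans (le_abs_self _)⟩
      · exact ⟨0, le_rfl, fun h2 h3 => absurd ⟨h2, h3⟩ hl⟩
    choose m hm0 hm using h1
    have hs : ∀ l ∈ Finset.range (n + 1), m l ≤ ∑ l ∈ Finset.range (n + 1), m l :=
      fun l hl => Finset.single_le_sum (fun i _ => hm0 i) hl
    refine ⟨1 + ∑ l ∈ Finset.range (n + 1), m l, ?_, ?_⟩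
    · have := Finset.sum_nonneg (fun i (_ : i ∈ Finset.range (n + 1)) => hm0 i)
      linarith
    · intro l h2 h3 t ht
      have := hs l (Finset.mem_range.2 (by omega))
      linarith [hm l h2 h3 t ht]
  have hM0 : 0 ≤ M := by linarith
  -- uniform bound on the fundamental matrix
  obtain ⟨F, hF0, hF⟩ : ∃ F : ℝ, 0 ≤ F ∧ ∀ i j, ∀ t ∈ Icc t0 τ, |Φ t i j| ≤ F := by
    have h1 : ∀ i j : Fin n, ∃ M : ℝ, 0 ≤ M ∧ ∀ t ∈ Icc t0 τ, |Φ t i j| ≤ M := by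
      intro i j
      obtain ⟨M, hM⟩ := isCompact_Icc.exists_bound_of_continuousOn (hΦ.1 i j)
      exact ⟨|M|, abs_nonneg _, fun t ht => (hM t ht).trans (le_abs_self _)⟩
    choose m hm0 hm using h1
    refine ⟨∑ i, ∑ j, m i j, Finset.sum_nonneg fun i _ => Finset.sum_nonneg fun j _ => hm0 i j, ?_⟩
    intro i j t ht
    refine (hm i j t ht).trans ?_
    refine (Finset.single_le_sum (f := fun j => m i j) (fun j _ => hm0 i j)
      (Finset.mem_univ j)).trans ?_
    exact Finset.single_le_sum (f := fun i => ∑ j, m i j)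
      (fun i _ => Finset.sum_nonneg fun j _ => hm0 i j) (Finset.mem_univ i)
  have haint : ∀ l, 2 ≤ l → l ≤ n → IntervalIntegrable (a l) volume t0 τ := fun l h2 h3 =>
    int_of_bdd hτ.le (hreg.1 l h2 h3).aestronglyMeasurable (haM l h2 h3)
  obtain ⟨δ0, hδ0, hδτ, c, hc, hlow⟩ := lower hτ haint hα hΦ o ho
  set Q : ℝ := n * F * (M ^ n * L / √c) + M ^ n * L with hQ
  have hQ0 : 0 ≤ Q := by positivity
  refine ⟨min δ0 (min 1 (1 / (2 * (Q + 1)))), lt_min hδ0 (lt_min one_pos (by positivity)), ?_, ?_⟩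
  · linarith [min_le_left δ0 (min 1 (1 / (2 * (Q + 1))))]
  intro T hT
  obtain ⟨h, hh⟩ : ∃ h, h = T - t0 := ⟨_, rfl⟩
  have hTh : T = t0 + h := by rw [hh]; ring
  have hh0 : 0 < h := by linarith [hT.1]
  have hle : h ≤ min δ0 (min 1 (1 / (2 * (Q + 1)))) := by linarith [hT.2]
  have hhδ : h ≤ δ0 := hle.trans (min_le_left _ _)
  have hh1 : h ≤ 1 := hle.trans ((min_le_right _ _).trans (min_le_left _ _))
  have hhQ : h ≤ 1 / (2 * (Q + 1)) := hle.trans ((min_le_right _ _).trans (min_le_right _ _))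
  have hQh : Q * h ≤ 1 / 2 := by
    rw [le_div_iff₀ (by positivity)] at hhQ
    nlinarith
  have hTτ : T ≤ τ := by linarith
  have ht0T : t0 ≤ T := hT.1.le
  have hsub : Icc t0 T ⊆ Icc t0 τ := Icc_subset_Icc_right hTτ
  have hΦT := hΦ.mono hTτ
  have hlowT : ∀ (w : Fin n → ℝ) (j : Fin n),
      c * h * (w j * h ^ (j : ℕ)) ^ 2 ≤ ∫ s in t0..T, ((Φ s).mulVec w o) ^ 2 := by
    rw [hTh]; exact hlow h ⟨hh0, hhδ⟩
  have hU : IsUnit (Psi n 1 t0 (fun _ => triC n) Φ T) := by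
    rw [← Matrix.mulVec_injective_iff_isUnit]
    intro v1 v2 h12
    rw [← sub_eq_zero]
    have h3 : (Psi n 1 t0 (fun _ => triC n) Φ T).mulVec (v1 - v2) = 0 := by
      rw [Matrix.mulVec_sub]; exact sub_eq_zero.2 h12
    have h4 := Psi_quad ht0T o ho hΦT (v1 - v2)
    rw [h3] at h4
    simp only [Pi.zero_apply, mul_zero, Finset.sum_const_zero] at h4
    ext j
    have h5 := hlowT (v1 - v2) j
    rw [← h4] at h5
    have h6 : ((v1 - v2) j * h ^ (j : ℕ)) ^ 2 = 0 := by
      apply le_antisymm _ (sq_nonneg _)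
      by_contra! hcon
      have : 0 < c * h * ((v1 - v2) j * h ^ (j : ℕ)) ^ 2 := by positivity
      linarith
    have h7 := (pow_eq_zero_iff two_ne_zero).1 h6
    exact (mul_eq_zero.1 h7).resolve_right (by positivity)
  refine ⟨hU, ?_⟩
  intro x hx hxy hxρ z hz hzρ S hS hzx
  have haintT : ∀ l, 2 ≤ l → l ≤ n → IntervalIntegrable (a l) volume t0 T := fun l h2 h3 =>
    intInt_mono (haint l h2 h3) ⟨ht0T, hTτ⟩
  have haMT : ∀ l, 2 ≤ l → l ≤ n → ∀ t ∈ Icc t0 T, |a l t| ≤ M := fun l h2 h3 t ht =>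
    haM l h2 h3 t (hsub ht)
  have hxT : IsSolution n t0 T (triA n a) (triG n f fn) x :=
    ⟨hx.1.mono hsub, fun t ht i => hx.2 t (hsub ht) i⟩
  obtain ⟨w, q, hqc, hqe, hw, hFx⟩ := F_diff ht0T hM0 haintT haMT hΦT o ho hU
    (g := triG n f fn) (x := x) (z := z) (y := y)
    (g_int ht0T hTτ hreg hρ hfnbdd hxT.1 (fun t ht => hxρ t (hsub ht)))
    (g_int ht0T hTτ hreg hρ hfnbdd hz hzρ) hxT (fun t ht => hxy t (hsub ht)) (hyc.mono hsub)
  have hgr := growth (β := L * S) (q := q)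
    (b := fun s i => triG n f fn s (z s) i - triG n f fn s (x s) i) hM0 (by positivity) haMT hqe
    (by
      intro t ht i hi
      simp only [triG, if_neg (show ¬ ((i : ℕ) = n - 1) by omega), sub_self])
    (by
      intro t ht i hi
      simp only [triG, if_pos (show ((i : ℕ) = n - 1) by omega)]
      refine (hLip t (hsub ht) _ _ (hzρ t ht) (hxρ t (hsub ht))).trans ?_
      exact mul_le_mul_of_nonneg_left (hzx t ht) hL)
  have hth : ∀ t ∈ Icc t0 T, 0 ≤ t - t0 ∧ t - t0 ≤ h := fun t ht =>
    ⟨by linarith [ht.1], by linarith [ht.2]⟩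
  have hqi : ∀ t ∈ Icc t0 T, ∀ i, |q t i| ≤ M ^ n * (L * S) * h := by
    intro t ht i
    refine (hgr (n - 1 - i) i (by omega) t ht).trans ?_
    have h1 : M ^ (n - 1 - (i : ℕ)) ≤ M ^ n := pow_le_pow_right₀ hM1 (by omega)
    have h2 : (t - t0) ^ (n - 1 - (i : ℕ) + 1) ≤ h := by
      calc _ ≤ h ^ (n - 1 - (i : ℕ) + 1) := pow_le_pow_left₀ (hth t ht).1 (hth t ht).2 _
        _ ≤ h ^ 1 := pow_le_pow_of_le_one hh0.le hh1 (by omega)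
        _ = h := pow_one h
    have h3 := pow_nonneg (hth t ht).1 (n - 1 - (i : ℕ) + 1)
    gcongr
  set B : ℝ := M ^ n * (L * S) * h ^ n with hB
  have hB0 : 0 ≤ B := by positivity
  have hqo : ∀ t ∈ Icc t0 T, |q t o| ≤ B := by
    intro t ht
    refine (hgr (n - 1) o (by omega) t ht).trans ?_
    have h1 : M ^ (n - 1) ≤ M ^ n := pow_le_pow_right₀ hM1 (by omega)
    have h2 : (t - t0) ^ (n - 1 + 1) ≤ h ^ n := by
      rw [Nat.sub_add_cancel hn]
      exact pow_le_pow_left₀ (hth t ht).1 (hth t ht).2 _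
    have h3 := pow_nonneg (hth t ht).1 (n - 1 + 1)
    have h4 : M ^ (n - 1) * (L * S) ≤ M ^ n * (L * S) :=
      mul_le_mul_of_nonneg_right h1 (by positivity)
    rw [hB]
    exact mul_le_mul h4 h2 h3 (by positivity)
  -- energy estimate
  have hPc := mulVec_cont hΦT w o
  have hE1 : ∫ s in t0..T, ((Φ s).mulVec w o) ^ 2
      = - ∫ s in t0..T, (Φ s).mulVec w o * q s o := by
    rw [← Psi_quad ht0T o ho hΦT w, ← sum_int ht0T o hΦT w (hqc o)]
    simp only [hw, mul_neg, Finset.sum_neg_distrib]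
  have hE2 : 0 ≤ ∫ s in t0..T, ((Φ s).mulVec w o + q s o) ^ 2 :=
    intervalIntegral.integral_nonneg ht0T fun s _ => sq_nonneg _
  have hE3 : ∫ s in t0..T, ((Φ s).mulVec w o + q s o) ^ 2
      = (∫ s in t0..T, ((Φ s).mulVec w o) ^ 2) + (2 * ∫ s in t0..T, (Φ s).mulVec w o * q s o)
        + ∫ s in t0..T, (q s o) ^ 2 := by
    have i1 : IntervalIntegrable (fun s => ((Φ s).mulVec w o) ^ 2) volume t0 T :=
      contOn_int ht0T (hPc.pow 2)
    have i2 : IntervalIntegrable (fun s => 2 * ((Φ s).mulVec w o * q s o)) volume t0 T :=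
      contOn_int ht0T (continuousOn_const.mul (hPc.mul (hqc o)))
    have i3 : IntervalIntegrable (fun s => (q s o) ^ 2) volume t0 T :=
      contOn_int ht0T ((hqc o).pow 2)
    have i4 : IntervalIntegrable (fun s => ((Φ s).mulVec w o) ^ 2
        + 2 * ((Φ s).mulVec w o * q s o)) volume t0 T := i1.add i2
    rw [← intervalIntegral.integral_const_mul, ← intervalIntegral.integral_add i1 i2,
      ← intervalIntegral.integral_add i4 i3]
    congr 1
    ext s
    ring
  have hE4 : ∫ s in t0..T, (q s o) ^ 2 ≤ h * B ^ 2 := by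
    have i3 : IntervalIntegrable (fun s => (q s o) ^ 2) volume t0 T :=
      contOn_int ht0T ((hqc o).pow 2)
    have := intervalIntegral.integral_mono_on ht0T i3
      (contOn_int ht0T (continuousOn_const (c := B ^ 2))) (fun s hs => by
        have := hqo s hs
        show (q s o) ^ 2 ≤ B ^ 2
        rw [← sq_abs]
        exact pow_le_pow_left₀ (abs_nonneg _) this 2)
    rw [intervalIntegral.integral_const, smul_eq_mul, ← hh] at this
    exact this
  have hE5 : ∫ s in t0..T, ((Φ s).mulVec w o) ^ 2 ≤ h * B ^ 2 := by linarith
  have hsc : 0 < √c := Real.sqrt_pos.2 hc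
  have hwj : ∀ j : Fin n, |w j| ≤ M ^ n * L / √c * S * h := by
    intro j
    have h1 := (hlowT w j).trans hE5
    have h2 : (√c * (|w j| * h ^ (j : ℕ))) ^ 2 ≤ B ^ 2 := by
      have e : (√c * (|w j| * h ^ (j : ℕ))) ^ 2 = c * (w j * h ^ (j : ℕ)) ^ 2 := by
        rw [mul_pow, Real.sq_sqrt hc.le, mul_pow, mul_pow, sq_abs]
      rw [e]
      have : h * (c * (w j * h ^ (j : ℕ)) ^ 2) ≤ h * B ^ 2 := by linarith
      exact le_of_mul_le_mul_left this hh0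
    have h3 : √c * (|w j| * h ^ (j : ℕ)) ≤ B := by
      exact (abs_le_of_sq_le_sq' h2 hB0).2
    have h4 : B = M ^ n * (L * S) * h ^ (n - 1 - (j : ℕ)) * h * h ^ (j : ℕ) := by
      have hj := j.2
      have e : h ^ n = h ^ (n - 1 - (j : ℕ)) * h * h ^ (j : ℕ) := by
        rw [← pow_succ, ← pow_add]
        congr 1
        omega
      rw [hB, e]
      ring
    have h5 : √c * |w j| ≤ M ^ n * (L * S) * h := by
      have h6 : (√c * |w j|) * h ^ (j : ℕ)
          ≤ (M ^ n * (L * S) * h ^ (n - 1 - (j : ℕ)) * h) * h ^ (j : ℕ) := by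
        rw [← h4]; linarith
      refine (le_of_mul_le_mul_right h6 (by positivity)).trans ?_
      have h7 : h ^ (n - 1 - (j : ℕ)) ≤ 1 := pow_le_one₀ hh0.le hh1
      have h8 : 0 ≤ M ^ n * (L * S) := by positivity
      have := mul_le_mul_of_nonneg_left h7 h8
      rw [mul_one] at this
      exact mul_le_mul_of_nonneg_right this hh0.le
    have h9 : M ^ n * L / √c * S * h = (M ^ n * (L * S) * h) / √c := by ring
    rw [h9, le_div_iff₀ hsc]
    linarith
  constructor
  · have hc1 : ContinuousOn (fun t => x t + ((Φ t).mulVec w + q t)) (Icc t0 T) :=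
      hxT.1.add ((continuousOn_pi.2 fun i => mulVec_cont hΦT w i).add (continuousOn_pi.2 hqc))
    refine hc1.congr ?_
    intro t ht
    change _ = x t + ((Φ t).mulVec w + q t)
    rw [← hFx t ht]; abel
  · intro t ht
    rw [hFx t ht, pi_norm_le_iff_of_nonneg (by positivity)]
    intro i
    rw [Pi.add_apply]
    refine (norm_add_le _ _).trans ?_
    have h1 : ‖(Φ t).mulVec w i‖ ≤ n * F * (M ^ n * L / √c) * S * h := by
      simp only [Matrix.mulVec, dotProduct]
      refine (norm_sum_le _ _).trans ?_
      have : ∀ j ∈ (Finset.univ : Finset (Fin n)),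
          ‖Φ t i j * w j‖ ≤ F * (M ^ n * L / √c * S * h) := by
        intro j _
        rw [norm_mul]
        exact mul_le_mul (hF i j t (hsub ht)) (hwj j) (norm_nonneg _) hF0
      refine (Finset.sum_le_sum this).trans (le_of_eq ?_)
      rw [Finset.sum_const, Finset.card_univ, Fintype.card_fin, nsmul_eq_mul]
      ring
    have h2 : ‖q t i‖ ≤ M ^ n * (L * S) * h := hqi t ht i
    calc _ ≤ _ := add_le_add h1 h2
      _ = (Q * h) * S := by rw [hQ]; ring
      _ ≤ 1 / 2 * S := mul_le_mul_of_nonneg_right hQh hS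
      _ = S / 2 := by ring

lemma le_supN_s2 {n : ℕ} {s t : ℝ} {p : ℝ → Fin n → ℝ} (hp : ContinuousOn p (Icc s t)) :
    ∀ r ∈ Icc s t, ‖p r‖ ≤ supN n s t p := by
  intro r hr
  obtain ⟨C, hC⟩ := isCompact_Icc.exists_bound_of_continuousOn hp
  exact le_ciSup (f := fun t : Icc s t => ‖p t‖) ⟨C, by rintro _ ⟨u, rfl⟩; exact hC u u.2⟩ ⟨r, hr⟩

theorem stmt2 (n : ℕ) (hn : 2 ≤ n) (t0 τ : ℝ) (ht : t0 < τ)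
    (a f : ℕ → ℝ → ℝ) (fn : ℝ → (Fin n → ℝ) → ℝ)
    (hreg : TriRegular n t0 τ a f fn)
    (hfnbdd : ∀ R > (0:ℝ), ∃ M : ℝ, ∀ t ∈ Set.Icc t0 τ, ∀ v : Fin n → ℝ,
      ‖v‖ ≤ R → |fn t v| ≤ M)
    (α : ℕ → ℝ)
    (hα : ∀ l, 2 ≤ l → l ≤ n →
      Filter.Tendsto (a l) (nhdsWithin t0 (Set.Ioi t0)) (nhds (α l)) ∧ α l ≠ 0)
    (hfnLip : ∀ ρ > (0:ℝ), ∃ L : ℝ, ∀ t ∈ Set.Icc t0 τ, ∀ z1 z2 : Fin n → ℝ,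
      ‖z1‖ ≤ ρ → ‖z2‖ ≤ ρ → |fn t z1 - fn t z2| ≤ L * ‖z1 - z2‖)
    (Φ : ℝ → Matrix (Fin n) (Fin n) ℝ) (hΦ : IsFundamental n t0 τ (triA n a) Φ)
    (y : ℝ → ℝ) (hy_cont : ContinuousOn y (Set.Icc t0 τ))
    (hy_out : ∃ x0 : ℝ → (Fin n → ℝ), IsSolution n t0 τ (triA n a) (triG n f fn) x0 ∧
      ∀ t ∈ Set.Icc t0 τ, x0 t ⟨0, by omega⟩ = y t) :
    ∀ R > (0:ℝ), ∃ tseq : ℕ → ℝ,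
      (∀ ν : ℕ, 1 ≤ ν → tseq ν ∈ Set.Ioc t0 τ) ∧
      (∀ ν : ℕ, 1 ≤ ν → tseq (ν + 1) < tseq ν) ∧
      Filter.Tendsto tseq Filter.atTop (nhds t0) ∧
      (∀ ν : ℕ, 1 ≤ ν → IsUnit (Psi n 1 t0 (fun _ => triC n) Φ (tseq ν))) ∧
      (∀ x : ℝ → (Fin n → ℝ),
        IsSolution n t0 τ (triA n a) (triG n f fn) x →
        (∀ t ∈ Set.Icc t0 τ, x t ⟨0, by omega⟩ = y t) →
        supN n t0 τ x < R →
        ∀ z : ℕ → ℝ → (Fin n → ℝ),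
          ContinuousOn (z 1) (Set.Icc t0 (tseq 1)) →
          supN n t0 (tseq 1) (z 1) < R →
          (∀ ν : ℕ, 1 ≤ ν → ∀ t ∈ Set.Icc t0 (tseq ν),
            z (ν + 1) t = Fmap n 1 t0 (fun _ => triC n) Φ (triG n f fn)
              (fun s _ => y s) (tseq ν) (z ν) t) →
          (∀ ν : ℕ, 1 ≤ ν →
            supN n t0 (tseq ν) (fun t => z (ν + 1) t - x t)
              ≤ (1/2 : ℝ) ^ ν * supN n t0 (tseq 1) (fun t => z 1 t - x t)) ∧
          Filter.Tendsto (fun ν => z ν (tseq ν)) Filter.atTop (nhds (x t0))) := by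
  intro R hR
  obtain ⟨L, hL⟩ := hfnLip (3 * R) (by linarith)
  obtain ⟨δ, hδ, hδτ, hcon⟩ := contract (ρ := 3 * R) (L := |L|) ht hreg hfnbdd hα (by linarith)
    (abs_nonneg L)
    (fun t ht z1 z2 h1 h2 => (hL t ht z1 z2 h1 h2).trans
      (mul_le_mul_of_nonneg_right (le_abs_self L) (norm_nonneg _))) hΦ hy_cont
    (⟨0, by omega⟩ : Fin n) rfl
  have hmem : ∀ ν : ℕ, 1 ≤ ν → t0 + δ / (ν : ℝ) ∈ Ioc t0 (t0 + δ) := by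
    intro ν hν
    have h1 : (1 : ℝ) ≤ ν := by exact_mod_cast hν
    have h2 : 0 < δ / (ν : ℝ) := by positivity
    have h3 : δ / (ν : ℝ) ≤ δ := div_le_self hδ.le h1
    exact ⟨by linarith, by linarith⟩
  have hdec : ∀ ν : ℕ, 1 ≤ ν → t0 + δ / ((ν + 1 : ℕ) : ℝ) < t0 + δ / (ν : ℝ) := by
    intro ν hν
    have h1 : (0 : ℝ) < ν := by exact_mod_cast hν
    have : δ / ((ν + 1 : ℕ) : ℝ) < δ / (ν : ℝ) :=
      div_lt_div_of_pos_left hδ h1 (by push_cast; linarith)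
    linarith
  have hlim : Tendsto (fun ν : ℕ => t0 + δ / (ν : ℝ)) atTop (𝓝 t0) := by
    simpa using (tendsto_const_div_atTop_nhds_zero_nat δ).const_add t0
  refine ⟨fun ν => t0 + δ / (ν : ℝ), ?_, hdec, hlim, fun ν hν => (hcon _ (hmem ν hν)).1, ?_⟩
  · intro ν hν
    exact ⟨(hmem ν hν).1, (hmem ν hν).2.trans hδτ⟩
  intro x hx hxy hxR z hz1 hz1R hzrec
  obtain ⟨T, hTdef⟩ : ∃ T : ℕ → ℝ, T = fun ν : ℕ => t0 + δ / (ν : ℝ) := ⟨_, rfl⟩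
  have hTν : ∀ ν : ℕ, t0 + δ / (ν : ℝ) = T ν := fun ν => by rw [hTdef]
  simp only [hTν] at *
  have hsub : ∀ ν : ℕ, 1 ≤ ν → Icc t0 (T ν) ⊆ Icc t0 τ := fun ν hν =>
    Icc_subset_Icc_right ((hmem ν hν).2.trans hδτ)
  have hxb : ∀ t ∈ Icc t0 τ, ‖x t‖ ≤ R := fun t ht => (le_supN_s2 hx.1 t ht).trans hxR.le
  have hz1b : ∀ t ∈ Icc t0 (T 1), ‖z 1 t‖ ≤ R := fun t ht => (le_supN_s2 hz1 t ht).trans hz1R.le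
  set S := supN n t0 (T 1) (fun t => z 1 t - x t) with hS
  have hzx1 : ∀ t ∈ Icc t0 (T 1), ‖z 1 t - x t‖ ≤ S :=
    le_supN_s2 (p := fun t => z 1 t - x t) (hz1.sub (hx.1.mono (hsub 1 le_rfl)))
  have hT1 : t0 ∈ Icc t0 (T 1) := ⟨le_rfl, (hmem 1 le_rfl).1.le⟩
  have hS0 : 0 ≤ S := (norm_nonneg _).trans (hzx1 t0 hT1)
  have hS2 : S ≤ 2 * R := by
    have : Nonempty (Icc t0 (T 1)) := ⟨⟨t0, hT1⟩⟩
    apply ciSup_le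
    rintro ⟨t, ht'⟩
    have h1 := hz1b t ht'
    have h2 := hxb t (hsub 1 le_rfl ht')
    exact (norm_sub_le _ _).trans (by linarith)
  have hstep : ∀ k : ℕ, ContinuousOn (z (k + 1)) (Icc t0 (T (k + 1))) →
      (∀ t ∈ Icc t0 (T (k + 1)), ‖z (k + 1) t - x t‖ ≤ (1 / 2 : ℝ) ^ k * S) →
      ContinuousOn (z (k + 2)) (Icc t0 (T (k + 1))) ∧
      ∀ t ∈ Icc t0 (T (k + 1)), ‖z (k + 2) t - x t‖ ≤ (1 / 2 : ℝ) ^ (k + 1) * S := by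
    intro k hc hb
    have h1k : 1 ≤ k + 1 := by omega
    have hk1 : (1 / 2 : ℝ) ^ k * S ≤ S :=
      mul_le_of_le_one_left hS0 (pow_le_one₀ (by norm_num) (by norm_num))
    have hzb : ∀ t ∈ Icc t0 (T (k + 1)), ‖z (k + 1) t‖ ≤ 3 * R := by
      intro t ht'
      have h1 := hb t ht'
      have h2 := hxb t (hsub _ h1k ht')
      have h3 : ‖z (k + 1) t‖ ≤ ‖z (k + 1) t - x t‖ + ‖x t‖ := by
        simpa using norm_add_le (z (k + 1) t - x t) (x t)
      linarith
    obtain ⟨hFc, hFb⟩ := (hcon _ (hmem (k + 1) h1k)).2 x hx hxy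
      (fun t ht' => (hxb t ht').trans (by linarith)) (z (k + 1)) hc hzb _ (by positivity) hb
    refine ⟨hFc.congr fun t ht' => hzrec (k + 1) h1k t ht', ?_⟩
    intro t ht'
    rw [hzrec (k + 1) h1k t ht']
    refine (hFb t ht').trans (le_of_eq ?_)
    ring
  have hind : ∀ k : ℕ, ContinuousOn (z (k + 1)) (Icc t0 (T (k + 1))) ∧
      ∀ t ∈ Icc t0 (T (k + 1)), ‖z (k + 1) t - x t‖ ≤ (1 / 2 : ℝ) ^ k * S := by
    intro k
    induction k with
    | zero => exact ⟨hz1, by simpa using hzx1⟩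
    | succ k ih =>
      have hss : Icc t0 (T (k + 1 + 1)) ⊆ Icc t0 (T (k + 1)) :=
        Icc_subset_Icc_right (hdec (k + 1) (by omega)).le
      obtain ⟨h1, h2⟩ := hstep k ih.1 ih.2
      exact ⟨h1.mono hss, fun t ht' => h2 t (hss ht')⟩
  constructor
  · intro ν hν
    obtain ⟨k, rfl⟩ : ∃ k, ν = k + 1 := ⟨ν - 1, by omega⟩
    have : Nonempty (Icc t0 (T (k + 1))) := ⟨⟨t0, le_rfl, (hmem (k + 1) hν).1.le⟩⟩
    apply ciSup_le
    rintro ⟨t, ht'⟩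
    exact (hstep k (hind k).1 (hind k).2).2 t ht'
  · rw [← tendsto_add_atTop_iff_nat 1]
    have hlim' : Tendsto (fun k : ℕ => T (k + 1)) atTop (𝓝 t0) :=
      (tendsto_add_atTop_iff_nat 1).2 hlim
    have hx0 : Tendsto (fun k : ℕ => x (T (k + 1))) atTop (𝓝 (x t0)) := by
      have hcw : Tendsto x (𝓝[Icc t0 τ] t0) (𝓝 (x t0)) := hx.1 t0 ⟨le_rfl, ht.le⟩
      refine hcw.comp (tendsto_nhdsWithin_iff.2 ⟨hlim', Eventually.of_forall fun k => ?_⟩)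
      exact hsub (k + 1) (by omega) ⟨(hmem (k + 1) (by omega)).1.le, le_rfl⟩
    have hd0 : Tendsto (fun k : ℕ => z (k + 1) (T (k + 1)) - x (T (k + 1))) atTop (𝓝 0) := by
      have hb0 : Tendsto (fun k : ℕ => (1 / 2 : ℝ) ^ k * S) atTop (𝓝 0) := by
        simpa using (tendsto_pow_atTop_nhds_zero_of_lt_one (r := (1 / 2 : ℝ)) (by norm_num)
          (by norm_num)).mul_const S
      refine squeeze_zero_norm (fun k => ?_) hb0
      exact (hind k).2 _ ⟨(hmem (k + 1) (by omega)).1.le, le_rfl⟩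
    simpa using hd0.add hx0
end
end

section
/- Let x, x̄ : [t0, τ] → ℝⁿ be continuously differentiable functions satisfying the triangular system ẋ_i(t) = a_{i+1}(t, x_1(t)) x_{i+1}(t) + f_i(t, x_1(t)) for i = 1, …, n−1 and ẋ_n(t) = f_n(t, x(t)) on [t0, τ] (and likewise for x̄). Assume that the outputs coincide, x_1(t) = x̄_1(t) for all t ∈ [t0, τ], and that a_{i+1}(t0, x_1(t0)) ≠ 0 for every i = 1, …, n−1. Then x(t) = x̄(t) for all t ∈ [t0, τ]; in particular x(t0) = x̄(t0). -/
open MeasureTheory Set Filter Topology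

theorem stmt3 (n : ℕ) (hn : 2 ≤ n) (t0 τ : ℝ) (ht : t0 < τ)
    (a : ℕ → ℝ → ℝ → ℝ) (f : ℕ → ℝ → ℝ → ℝ) (fn : ℝ → (Fin n → ℝ) → ℝ)
    (ha_cont : ∀ l, 2 ≤ l → l ≤ n →
      ContinuousOn (fun p : ℝ × ℝ => a l p.1 p.2) (Set.Icc t0 τ ×ˢ Set.univ))
    (hf_cont : ∀ l, 1 ≤ l → l ≤ n - 1 →
      ContinuousOn (fun p : ℝ × ℝ => f l p.1 p.2) (Set.Icc t0 τ ×ˢ Set.univ))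
    (hfn_cont : ContinuousOn (fun p : ℝ × (Fin n → ℝ) => fn p.1 p.2)
      (Set.Icc t0 τ ×ˢ Set.univ))
    (hfn_lip : ∀ R > (0:ℝ), ∃ L : ℝ, ∀ t ∈ Set.Icc t0 τ, ∀ z1 z2 : Fin n → ℝ,
      ‖z1‖ ≤ R → ‖z2‖ ≤ R → |fn t z1 - fn t z2| ≤ L * ‖z1 - z2‖)
    (x xb : ℝ → (Fin n → ℝ))
    (hx : ∀ t ∈ Set.Icc t0 τ, ∀ i : Fin n,
      HasDerivWithinAt (fun s => x s i)
        (if (i : ℕ) = n - 1 then fn t (x t)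
         else a ((i : ℕ) + 2) t (x t ⟨0, by omega⟩) * x t (i + ⟨1, by omega⟩)
           + f ((i : ℕ) + 1) t (x t ⟨0, by omega⟩))
        (Set.Icc t0 τ) t)
    (hxb : ∀ t ∈ Set.Icc t0 τ, ∀ i : Fin n,
      HasDerivWithinAt (fun s => xb s i)
        (if (i : ℕ) = n - 1 then fn t (xb t)
         else a ((i : ℕ) + 2) t (xb t ⟨0, by omega⟩) * xb t (i + ⟨1, by omega⟩)
           + f ((i : ℕ) + 1) t (xb t ⟨0, by omega⟩))
        (Set.Icc t0 τ) t)
    (hout : ∀ t ∈ Set.Icc t0 τ, x t ⟨0, by omega⟩ = xb t ⟨0, by omega⟩)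
    (ha0 : ∀ l, 2 ≤ l → l ≤ n → a l t0 (x t0 ⟨0, by omega⟩) ≠ 0) :
    (∀ t ∈ Set.Icc t0 τ, x t = xb t) ∧ x t0 = xb t0 := by
  have hxc : ∀ i : Fin n, ContinuousOn (fun s => x s i) (Set.Icc t0 τ) :=
    fun i t h => (hx t h i).continuousWithinAt
  have hxbc : ∀ i : Fin n, ContinuousOn (fun s => xb s i) (Set.Icc t0 τ) :=
    fun i t h => (hxb t h i).continuousWithinAt
  have hac : ∀ l, 2 ≤ l → l ≤ n →
      ContinuousOn (fun t => a l t (x t ⟨0, by omega⟩)) (Set.Icc t0 τ) := by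
    intro l h1 h2
    exact (ha_cont l h1 h2).comp (f := fun t => (t, x t ⟨0, by omega⟩))
      (continuousOn_id.prodMk (hxc _)) (fun t h => ⟨h, mem_univ _⟩)
  have ht0 : t0 ∈ Set.Icc t0 τ := ⟨le_rfl, ht.le⟩
  have hIoo : Set.Ioo t0 τ ∈ 𝓝[>] t0 := Ioo_mem_nhdsGT ht
  have hIcc : Set.Icc t0 τ ∈ 𝓝[>] t0 := mem_of_superset hIoo Ioo_subset_Icc_self
  have hle : 𝓝[>] t0 ≤ 𝓝[Set.Icc t0 τ] t0 :=
    le_inf inf_le_left (le_principal_iff.2 hIcc)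
  -- coordinates agree near t0
  have key : ∀ k (hk : k < n), ∀ᶠ t in 𝓝[>] t0, x t ⟨k, hk⟩ = xb t ⟨k, hk⟩ := by
    intro k
    induction k with
    | zero =>
      intro hk
      filter_upwards [hIcc] with t h using hout t h
    | succ k ih =>
      intro hk
      have h1 := eventually_eventually_nhdsWithin.2 (ih (by omega))
      have h2 : ∀ᶠ t in 𝓝[>] t0, a (k + 2) t (x t ⟨0, by omega⟩) ≠ 0 :=
        ((hac (k + 2) (by omega) (by omega) t0 ht0).mono_left hle).eventually_ne
          (ha0 (k + 2) (by omega) (by omega))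
      filter_upwards [h1, h2, hIoo] with t h1 h2 h3
      rw [nhdsWithin_eq_nhds.2 (Ioi_mem_nhds h3.1)] at h1
      have hI : Set.Icc t0 τ ∈ 𝓝 t := Icc_mem_nhds h3.1 h3.2
      have hm := Ioo_subset_Icc_self h3
      have d1 := (hx t hm ⟨k, by omega⟩).hasDerivAt hI
      have d2 := (hxb t hm ⟨k, by omega⟩).hasDerivAt hI
      have d3 := d1.unique (d2.congr_of_eventuallyEq h1)
      have hkn : ¬ (k = n - 1) := by omega
      have hidx : (⟨k, by omega⟩ : Fin n) + ⟨1, by omega⟩ = ⟨k + 1, hk⟩ := by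
        apply Fin.ext
        simp [Fin.add_def, Nat.mod_eq_of_lt hk]
      simp only [hkn, if_false, hidx, ← hout t hm] at d3
      exact mul_left_cancel₀ h2 (add_right_cancel d3)
  have init : x t0 = xb t0 := by
    funext i
    have l1 : Tendsto (fun s => x s i) (𝓝[>] t0) (𝓝 (x t0 i)) := (hxc i t0 ht0).mono_left hle
    have l2 : Tendsto (fun s => xb s i) (𝓝[>] t0) (𝓝 (xb t0 i)) := (hxbc i t0 ht0).mono_left hle
    exact tendsto_nhds_unique l1 (l2.congr' ((key i i.2).mono fun t h => h.symm))
  refine ⟨?_, init⟩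
  have hxC : ContinuousOn x (Set.Icc t0 τ) := continuousOn_pi.2 hxc
  have hxbC : ContinuousOn xb (Set.Icc t0 τ) := continuousOn_pi.2 hxbc
  obtain ⟨R1, hR1⟩ := isCompact_Icc.exists_bound_of_continuousOn hxC
  obtain ⟨R2, hR2⟩ := isCompact_Icc.exists_bound_of_continuousOn hxbC
  obtain ⟨L, hL⟩ := hfn_lip (max (max R1 R2) 1) (lt_max_of_lt_right one_pos)
  have hC : ∀ i : Fin n, ∃ C : ℝ, (i : ℕ) ≠ n - 1 → ∀ t ∈ Set.Icc t0 τ,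
      |a ((i : ℕ) + 2) t (x t ⟨0, by omega⟩)| ≤ C := by
    intro i
    by_cases hi : (i : ℕ) = n - 1
    · exact ⟨0, fun h => absurd hi h⟩
    · obtain ⟨C, hC⟩ := isCompact_Icc.exists_bound_of_continuousOn
        (hac ((i : ℕ) + 2) (by omega) (by omega))
      exact ⟨C, fun _ => hC⟩
  choose C hC using hC
  have hS : ∀ i, |C i| ≤ ∑ j, |C j| := fun i =>
    Finset.single_le_sum (f := fun j => |C j|) (fun j _ => abs_nonneg _) (Finset.mem_univ i)
  have hS0 : 0 ≤ ∑ j, |C j| := Finset.sum_nonneg fun j _ => abs_nonneg _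
  set K : ℝ := |L| + ∑ j, |C j| with hK
  have hd : ∀ t ∈ Set.Icc t0 τ, ∃ e' : Fin n → ℝ,
      HasDerivWithinAt (fun s => x s - xb s) e' (Set.Icc t0 τ) t ∧ ‖e'‖ ≤ K * ‖x t - xb t‖ := by
    intro t h
    refine ⟨_, hasDerivWithinAt_pi.2 fun i => (hx t h i).sub (hxb t h i), ?_⟩
    refine (pi_norm_le_iff_of_nonneg (by positivity)).2 fun i => ?_
    by_cases hi : (i : ℕ) = n - 1
    · simp only [hi, if_true, Real.norm_eq_abs]
      refine (hL t h _ _ ((hR1 t h).trans (by simp)) ((hR2 t h).trans (by simp))).trans ?_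
      gcongr
      linarith [le_abs_self L]
    · simp only [hi, if_false, ← hout t h, Real.norm_eq_abs]
      rw [add_sub_add_right_eq_sub, ← mul_sub, abs_mul]
      gcongr
      · have := hC i hi t h
        linarith [le_abs_self (C i), hS i, abs_nonneg L]
      · exact norm_le_pi_norm (x t - xb t) (i + ⟨1, by omega⟩)
  choose! e' he1 he2 using hd
  intro t h
  have := norm_le_gronwallBound_of_norm_deriv_right_le (f := fun s => x s - xb s) (f' := e')
    (δ := 0) (K := K) (ε := 0) (hxC.sub hxbC)
    (fun t h => ((he1 t (Ico_subset_Icc_self h)).mono_of_mem_nhdsWithin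
      (Icc_mem_nhdsGE_of_mem h)))
    (by simp [init]) (fun t h => by simpa using he2 t (Ico_subset_Icc_self h)) t h
  simp only [gronwallBound_ε0_δ0] at this
  exact sub_eq_zero.1 (norm_le_zero_iff.1 this)
end
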